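/- Let (W, S) be a finite Coxeter system, B⁺ its Artin–Tits monoid, and Δ ∈ B⁺ its Garside element (the product in B⁺ of the letters of any reduced word for the longest element w₀ of W). If x, y ∈ B⁺ are periodic of the same period, i.e. x^d = Δ^p and y^{d'} = Δ^{p'} with d, p, d', p' positive integers satisfying d·p' = d'·p, then x and y are cyclically conjugate: (x, y) lies in the reflexive–transitive closure of the relation relating a·b to b·a for all a, b ∈ B⁺. -/

import Mathlib

/-- The alternating word `s t s t ⋯` of length `m`, starting with `s`. -/
def altWord {B : Type*} (s t : B) : ℕ → List B
  | 0 => []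
  | n + 1 => s :: altWord t s n

/-- The braid congruence on the free monoid over `B` associated to a Coxeter matrix `M`:
the congruence generated by the braid relations, identifying the alternating words
`s t s ⋯` and `t s t ⋯` of length `M s t` whenever `s ≠ t` and `M s t < ∞`
(infinity being encoded by the entry `0`). -/
def braidCon {B : Type*} (M : CoxeterMatrix B) : Con (FreeMonoid B) :=
  conGen (fun a b => ∃ s t : B, s ≠ t ∧ M s t ≠ 0 ∧
    a = FreeMonoid.ofList (altWord s t (M s t)) ∧
    b = FreeMonoid.ofList (altWord t s (M s t)))

/-- The Artin–Tits monoid of a Coxeter matrix `M`: the quotient of the free monoid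
on `B` by the braid relations. -/
def ArtinTitsMonoid {B : Type*} (M : CoxeterMatrix B) : Type _ :=
  (braidCon M).Quotient

instance {B : Type*} (M : CoxeterMatrix B) : Monoid (ArtinTitsMonoid M) :=
  inferInstanceAs (Monoid (braidCon M).Quotient)

/-- The image in the Artin–Tits monoid of a generator. -/
def ArtinTitsMonoid.of {B : Type*} (M : CoxeterMatrix B) (s : B) : ArtinTitsMonoid M :=
  (braidCon M).mk' (FreeMonoid.of s)


namespace ATM
open Real

/-! ## Part I: the geometric representation -/

section geom
variable {B : Type*} (M : CoxeterMatrix B)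

/-- simple roots -/
noncomputable def al (s : B) : B →₀ ℝ := Finsupp.single s 1

/-- cosine of a pair; the value is `1` when `M s t = 0` (infinity) and `-1` when `s = t`. -/
noncomputable def cc (s t : B) : ℝ := Real.cos (π / M s t)

noncomputable def phi (s : B) : (B →₀ ℝ) →ₗ[ℝ] ℝ :=
  Finsupp.linearCombination ℝ (fun t => 2 * cc M s t)

noncomputable def sig (s : B) : Module.End ℝ (B →₀ ℝ) :=
  LinearMap.id + (phi M s).smulRight (al s)

lemma sig_apply (s : B) (v : B →₀ ℝ) : sig M s v = v + phi M s v • al s := by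
  simp [sig]

lemma phi_al (s t : B) : phi M s (al t) = 2 * cc M s t := by
  simp [phi, al]

lemma cc_self (s : B) : cc M s s = -1 := by simp [cc]

lemma cc_comm (s t : B) : cc M s t = cc M t s := by simp [cc, M.symmetric s t]

lemma sig_al (s t : B) : sig M s (al t) = al t + (2 * cc M s t) • al s := by
  rw [sig_apply, phi_al]

lemma sig_al_self (s : B) : sig M s (al s) = - al s := by
  rw [sig_al, cc_self]; module

lemma sig_sig (s : B) (v : B →₀ ℝ) : sig M s (sig M s v) = v := by
  rw [sig_apply M s v, map_add, map_smul, sig_al_self, sig_apply]; module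

lemma sin_two_aux (θ φ : ℝ) : 2 * Real.cos θ * Real.sin φ = Real.sin (φ + θ) + Real.sin (φ - θ) := by
  rw [Real.sin_add, Real.sin_sub]; ring

/-- auxiliary vectors in the plane of two simple roots -/
noncomputable def rv (s t : B) (θ φ : ℝ) : B →₀ ℝ :=
  Real.sin (φ + θ) • al s + Real.sin φ • al t

lemma sig_rv (s t : B) (φ : ℝ) :
    (sig M s * sig M t) (rv s t (π / M s t) φ) = rv s t (π / M s t) (φ + 2 * (π / M s t)) := by
  have hst : cc M s t = Real.cos (π / M s t) := rfl
  have hts : cc M t s = Real.cos (π / M s t) := by rw [cc_comm]; rfl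
  generalize hθ : π / (M s t : ℝ) = θ at *
  have h1 := sin_two_aux θ (φ + θ)
  have h2 := sin_two_aux θ (φ + 2 * θ)
  have e1 : φ + θ + θ = φ + 2 * θ := by ring
  have e2 : φ + 2 * θ - θ = φ + θ := by ring
  have e3 : φ + θ - θ = φ := by ring
  rw [e1, e3] at h1
  rw [e2] at h2
  simp only [rv, Module.End.mul_apply, map_add, map_smul, sig_al, hst, hts, cc_self]
  have h1' : Real.sin (φ + 2 * θ) = 2 * Real.cos θ * Real.sin (φ + θ) - Real.sin φ := by linarith
  have h2' : Real.sin (φ + 2 * θ + θ) =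
      2 * Real.cos θ * Real.sin (φ + 2 * θ) - Real.sin (φ + θ) := by linarith
  rw [h2', h1']
  module

lemma sum_sin_aux (θ φ : ℝ) (m : ℕ) :
    2 * Real.sin θ * ∑ k ∈ Finset.range m, Real.sin (φ + 2 * k * θ)
      = Real.cos (φ - θ) - Real.cos (φ + 2 * m * θ - θ) := by
  induction m with
  | zero => simp
  | succ m ih =>
    rw [Finset.sum_range_succ, mul_add, ih]
    have : φ + 2 * ((m + 1 : ℕ) : ℝ) * θ - θ = (φ + 2 * m * θ) + θ := by push_cast; ring
    rw [this, Real.cos_add, Real.cos_sub (φ + 2 * m * θ)]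
    ring

lemma sin_pos_of_two_le {m : ℕ} (hm : 2 ≤ m) : 0 < Real.sin (π / m) := by
  apply Real.sin_pos_of_pos_of_lt_pi
  · positivity
  · have : (2 : ℝ) ≤ m := by exact_mod_cast hm
    apply div_lt_self Real.pi_pos; linarith

lemma sum_sin_zero {m : ℕ} (hm : 2 ≤ m) (φ : ℝ) :
    ∑ k ∈ Finset.range m, Real.sin (φ + 2 * k * (π / m)) = 0 := by
  have h := sum_sin_aux (π / m) φ m
  have hm0 : (m : ℝ) ≠ 0 := by positivity
  have : φ + 2 * m * (π / m) - π / m = φ - π / m + 2 * π := by field_simp; ring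
  rw [this, Real.cos_add_two_pi, sub_self] at h
  have := sin_pos_of_two_le hm
  rcases mul_eq_zero.mp h with h | h
  · linarith
  · exact h

lemma two_le_of_ne {s t : B} (hst : s ≠ t) (h0 : M s t ≠ 0) : 2 ≤ M s t := by
  have := M.off_diagonal s t hst
  omega

lemma sig_pow_rv (s t : B) (φ : ℝ) (k : ℕ) :
    ((sig M s * sig M t) ^ k) (rv s t (π / M s t) φ) =
      rv s t (π / M s t) (φ + 2 * k * (π / M s t)) := by
  induction k with
  | zero => simp
  | succ k ih =>
    rw [pow_succ', Module.End.mul_apply, ih, sig_rv]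
    congr 1; push_cast; ring

lemma sum_pow_rv {s t : B} (hst : s ≠ t) (h0 : M s t ≠ 0) (φ : ℝ) :
    (∑ k ∈ Finset.range (M s t), (sig M s * sig M t) ^ k) (rv s t (π / M s t) φ) = 0 := by
  have hm := two_le_of_ne M hst h0
  simp only [LinearMap.sum_apply, sig_pow_rv]
  simp only [rv, Finset.sum_add_distrib, ← Finset.sum_smul]
  rw [sum_sin_zero hm]
  have : ∀ k : ℕ, φ + 2 * k * (π / (M s t)) + π / M s t
      = (φ + π / M s t) + 2 * k * (π / M s t) := fun k => by ring
  simp only [this]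
  rw [sum_sin_zero hm]; simp

lemma sig_liftable : M.IsLiftable (sig M) := by
  intro s t
  by_cases hst : s = t
  · subst hst
    simp only [CoxeterMatrix.diagonal, pow_one]
    ext1 v
    ext1
    simp [sig_sig]
  by_cases h0 : M s t = 0
  · rw [h0, pow_zero]
  have hm := two_le_of_ne M hst h0
  have hsin := sin_pos_of_two_le hm
  set A := sig M s * sig M t with hA
  have hs0 : (∑ k ∈ Finset.range (M s t), A ^ k) (al s) = 0 := by
    have h := sum_pow_rv M hst h0 0
    simp only [rv, zero_add, Real.sin_zero, zero_smul, add_zero, map_smul] at h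
    exact (smul_eq_zero.mp h).resolve_left hsin.ne'
  have ht0 : (∑ k ∈ Finset.range (M s t), A ^ k) (al t) = 0 := by
    have h := sum_pow_rv M hst h0 (-(π / M s t))
    simp only [rv, neg_add_cancel, Real.sin_zero, zero_smul, zero_add, map_smul, Real.sin_neg] at h
    exact (smul_eq_zero.mp h).resolve_left (by linarith)
  have hgeom : A ^ (M s t) - 1 = (∑ k ∈ Finset.range (M s t), A ^ k) * (A - 1) :=
    (geom_sum_mul A (M s t)).symm
  have : A ^ (M s t) - 1 = 0 := by
    rw [hgeom]
    refine LinearMap.ext fun v => ?_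
    have hv : (A - 1) v = phi M t v • al t + (phi M s v + 2 * cc M s t * phi M t v) • al s := by
      rw [LinearMap.sub_apply, hA, Module.End.mul_apply, sig_apply M t v, map_add, map_smul,
        sig_al, sig_apply]
      simp only [Module.End.one_apply]
      module
    rw [Module.End.mul_apply, hv, map_add, map_smul, map_smul, hs0, ht0]
    simp
  exact sub_eq_zero.mp this

/-- Chebyshev-like sequence -/
noncomputable def pp (c : ℝ) : ℕ → ℝ
  | 0 => 0
  | 1 => 1
  | k + 2 => 2 * c * pp c (k + 1) - pp c k

lemma pp_sin (θ : ℝ) : ∀ k : ℕ, pp (Real.cos θ) k * Real.sin θ = Real.sin (k * θ)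
  | 0 => by simp [pp]
  | 1 => by simp [pp]
  | k + 2 => by
    have h1 := pp_sin θ (k + 1)
    have h2 := pp_sin θ k
    have h3 := sin_two_aux θ ((k + 1 : ℕ) * θ)
    have e1 : ((k + 1 : ℕ) : ℝ) * θ + θ = ((k + 2 : ℕ) : ℝ) * θ := by push_cast; ring
    have e2 : ((k + 1 : ℕ) : ℝ) * θ - θ = (k : ℝ) * θ := by push_cast; ring
    rw [e1, e2] at h3
    rw [pp, sub_mul, mul_assoc, h1, h2]; linarith

lemma pp_one : ∀ k : ℕ, pp 1 k = k
  | 0 => by simp [pp]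
  | 1 => by simp [pp]
  | k + 2 => by rw [pp, pp_one (k + 1), pp_one k]; push_cast; ring

lemma pp_nonneg {s t : B} (hst : s ≠ t) (k : ℕ) (hk : M s t = 0 ∨ k ≤ M s t) :
    0 ≤ pp (cc M s t) k := by
  by_cases h0 : M s t = 0
  · have : cc M s t = 1 := by simp [cc, h0]
    rw [this, pp_one]; positivity
  · have hk : k ≤ M s t := hk.resolve_left h0
    have hm := two_le_of_ne M hst h0
    have hsin := sin_pos_of_two_le hm
    have h := pp_sin (π / M s t) k
    have h2 : 0 ≤ Real.sin (k * (π / M s t)) := by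
      apply Real.sin_nonneg_of_nonneg_of_le_pi
      · positivity
      · have h1 : (k : ℝ) ≤ M s t := by exact_mod_cast hk
        have hm0 : (0 : ℝ) < M s t := by positivity
        rw [mul_div_assoc', div_le_iff₀ hm0]
        nlinarith [Real.pi_pos]
    rw [← h] at h2
    exact nonneg_of_mul_nonneg_left h2 hsin

/-- the letter that continues the alternating word of length `k` -/
def nxt (s t : B) : ℕ → B
  | 0 => s
  | k + 1 => nxt t s k

lemma nxt_cases (s t : B) (k : ℕ) :
    (nxt s t k = s ∧ nxt s t (k+1) = t) ∨ (nxt s t k = t ∧ nxt s t (k+1) = s) := by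
  induction k generalizing s t with
  | zero => left; simp [nxt]
  | succ k ih => 
    rcases ih t s with h | h
    · right; exact h
    · left; exact h

lemma altWord_length (s t : B) (k : ℕ) : (altWord s t k).length = k := by
  induction k generalizing s t with
  | zero => rfl
  | succ k ih => simp [altWord, ih]

lemma altWord_succ' (s t : B) (k : ℕ) : altWord s t (k + 1) = altWord s t k ++ [nxt s t k] := by
  induction k generalizing s t with
  | zero => rfl
  | succ k ih => rw [altWord, ih]; rfl

lemma altWord_add (s t : B) (j i : ℕ) :
    ∃ rest, altWord s t (j + i) = altWord s t j ++ rest ∧ rest.length = i := by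
  induction i with
  | zero => exact ⟨[], by simp⟩
  | succ i ih =>
    obtain ⟨r, h, hl⟩ := ih
    refine ⟨r ++ [nxt s t (j + i)], ?_, by simp [hl]⟩
    rw [← Nat.add_assoc, altWord_succ', h, List.append_assoc]

open CoxeterSystem in
lemma alternatingWord_eq (s t : B) (k : ℕ) : alternatingWord s t k = (altWord t s k).reverse := by
  induction k generalizing s t with
  | zero => rfl
  | succ k ih => rw [alternatingWord_succ, ih, altWord]; simp

end geom

section cox
variable {B : Type*} {M : CoxeterMatrix B} {W : Type*} [Group W] (cs : CoxeterSystem M W)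

noncomputable def rep : W →* Module.End ℝ (B →₀ ℝ) := cs.lift ⟨sig M, sig_liftable M⟩

lemma rep_simple (s : B) : rep cs (cs.simple s) = sig M s := cs.lift_apply_simple _ s

lemma rep_mul_apply (u v : W) (x : B →₀ ℝ) : rep cs (u * v) x = rep cs u (rep cs v x) := by
  rw [map_mul, Module.End.mul_apply]

lemma rep_inv_self (u : W) (x : B →₀ ℝ) : rep cs u⁻¹ (rep cs u x) = x := by
  rw [← rep_mul_apply]; simp

lemma rep_self_inv (u : W) (x : B →₀ ℝ) : rep cs u (rep cs u⁻¹ x) = x := by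
  rw [← rep_mul_apply]; simp

lemma wordProd_braid (s t : B) :
    cs.wordProd (altWord s t (M s t)) = cs.wordProd (altWord t s (M s t)) := by
  have h := cs.wordProd_braidWord_eq s t
  rw [CoxeterSystem.braidWord, CoxeterSystem.braidWord, alternatingWord_eq, alternatingWord_eq,
    cs.wordProd_reverse, cs.wordProd_reverse, M.symmetric t s] at h
  exact (inv_injective h).symm

/-- formula (i) -/
lemma rep_alt_inv (s t : B) (k j : ℕ) :
    ∃ x y, ((x = s ∧ y = t) ∨ (x = t ∧ y = s)) ∧
      rep cs (cs.wordProd (altWord t s k))⁻¹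
        (pp (cc M s t) j • al t + pp (cc M s t) (j + 1) • al s) =
      pp (cc M s t) (j + k) • al x + pp (cc M s t) (j + k + 1) • al y := by
  induction k generalizing s t j with
  | zero => exact ⟨t, s, Or.inr ⟨rfl, rfl⟩, by simp [altWord]⟩
  | succ k ih =>
    obtain ⟨x, y, hxy, h⟩ := ih t s (j + 1)
    refine ⟨x, y, hxy.symm, ?_⟩
    rw [altWord, cs.wordProd_cons, mul_inv_rev, rep_mul_apply, cs.inv_simple, rep_simple]
    rw [cc_comm M t s] at h
    have e : j + (k + 1) = j + 1 + k := by ring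
    rw [e, ← h]
    congr 1
    simp only [map_add, map_smul, sig_al, cc_self, pp, cc_comm M t s]
    module

/-- formula (ii) -/
lemma rep_alt_nxt (s t : B) (k : ℕ) :
    rep cs (cs.wordProd (altWord s t k)) (al (nxt s t k)) =
      pp (cc M s t) k • al t + pp (cc M s t) (k + 1) • al s := by
  induction k generalizing s t with
  | zero => simp [altWord, nxt, pp]
  | succ k ih =>
    rw [altWord, cs.wordProd_cons, rep_mul_apply, nxt, ih t s, rep_simple]
    simp only [map_add, map_smul, sig_al, cc_self, pp, cc_comm M t s]
    module

/-- coefficientwise nonnegativity -/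
def NN (v : B →₀ ℝ) : Prop := ∀ b, 0 ≤ v b

lemma NN.comb {u v : B →₀ ℝ} (hu : NN u) (hv : NN v) {a b : ℝ} (ha : 0 ≤ a) (hb : 0 ≤ b) :
    NN (a • u + b • v) := fun i => by
  have := mul_nonneg ha (hu i); have := mul_nonneg hb (hv i)
  simp; linarith

lemma NN_al (s : B) : NN (al s) := fun b => by
  classical
  rw [al, Finsupp.single_apply]; split_ifs <;> norm_num

lemma len_wordProd_mul (l : List B) (v : W) : cs.length (cs.wordProd l * v) ≤ l.length + cs.length v :=
  (cs.length_mul_le _ _).trans (by have := cs.length_wordProd_le l; omega)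

theorem sign_pos (w : W) (s : B) (h : cs.length w < cs.length (cs.simple s * w)) :
    NN (rep cs w⁻¹ (al s)) := by
  induction hn : cs.length w using Nat.strong_induction_on generalizing w s with
  | _ n ih =>
  subst hn
  by_cases hw : w = 1
  · subst hw; simpa using NN_al s
  obtain ⟨t, ht⟩ := cs.exists_leftDescent_of_ne_one hw
  have hts : s ≠ t := by
    rintro rfl; exact absurd ht (by rw [CoxeterSystem.IsLeftDescent]; omega)
  let P : ℕ → Prop := fun k => ∃ v, w = cs.wordProd (altWord t s k) * v ∧
    cs.length w = cs.length v + k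
  classical
  set k := Nat.findGreatest P (cs.length w) with hk
  have hP1 : P 1 := ⟨cs.simple t * w, by simp [altWord], by
    rw [cs.isLeftDescent_iff] at ht; omega⟩
  have hlen1 : 1 ≤ cs.length w := by
    obtain ⟨v, -, h⟩ := hP1; omega
  have hk1 : 1 ≤ k := Nat.le_findGreatest hlen1 hP1
  obtain ⟨v, hv, hvl⟩ : P k := Nat.findGreatest_spec hlen1 hP1
  have hmax : ¬ P (k + 1) := by
    intro hp
    obtain ⟨v', hv', hl⟩ := hp
    exact absurd (Nat.le_findGreatest (P := P) (by omega : k + 1 ≤ cs.length w) ⟨v', hv', hl⟩) (by omega)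
  have hA1 : cs.length v < cs.length (cs.simple (nxt t s k) * v) := by
    by_contra hcon
    rcases cs.length_simple_mul v (nxt t s k) with h1 | h1
    · omega
    apply hmax
    refine ⟨cs.simple (nxt t s k) * v, ?_, by omega⟩
    rw [altWord_succ', cs.wordProd_append, cs.wordProd_singleton, mul_assoc,
      cs.simple_mul_simple_cancel_left, ← hv]
  obtain ⟨k', hk'⟩ : ∃ k', k = k' + 1 := ⟨k - 1, by omega⟩
  have hA2 : cs.length v < cs.length (cs.simple (nxt t s k') * v) := by
    by_contra hcon
    rcases cs.length_simple_mul v (nxt t s k') with h1 | h1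
    · omega
    have h2 : w = cs.wordProd (altWord t s k') * (cs.simple (nxt t s k') * v) := by
      rw [hv, hk', altWord_succ', cs.wordProd_append, cs.wordProd_singleton, mul_assoc]
    have h3 := len_wordProd_mul cs (altWord t s k') (cs.simple (nxt t s k') * v)
    rw [← h2, altWord_length] at h3
    omega
  have hkm : M s t = 0 ∨ k + 1 ≤ M s t := by
    by_contra hcon
    push Not at hcon
    obtain ⟨i, hi⟩ : ∃ i, k = M s t + i := ⟨k - M s t, by omega⟩
    obtain ⟨r, hr, hrl⟩ := altWord_add t s (M s t) i
    obtain ⟨m', hm'⟩ : ∃ m', M s t = m' + 1 := ⟨M s t - 1, by omega⟩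
    have : cs.simple s * w = cs.wordProd (altWord t s m' ++ r) * v := by
      rw [hv, hi, hr, cs.wordProd_append, ← wordProd_braid cs s t, hm', altWord, cs.wordProd_cons,
        cs.wordProd_append, mul_assoc, mul_assoc, cs.simple_mul_simple_cancel_left, mul_assoc]
    have h3 := len_wordProd_mul cs (altWord t s m' ++ r) v
    rw [← this, List.length_append, altWord_length, hrl] at h3
    omega
  have hvs : NN (rep cs v⁻¹ (al s)) ∧ NN (rep cs v⁻¹ (al t)) := by
    have h1 := ih _ (by omega) v _ hA1 rfl
    have h2 := ih _ (by omega) v _ hA2 rfl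
    rcases nxt_cases t s k' with ⟨e1, e2⟩ | ⟨e1, e2⟩ <;> rw [hk', e2] at h1 <;> rw [e1] at h2 <;>
      exact ⟨by assumption, by assumption⟩
  obtain ⟨x, y, hxy, hf⟩ := rep_alt_inv cs s t k 0
  have hs : al s = pp (cc M s t) 0 • al t + pp (cc M s t) (0 + 1) • al s := by simp [pp]
  rw [hv, mul_inv_rev, rep_mul_apply, hs, hf, map_add, map_smul, map_smul]
  apply NN.comb
  · rcases hxy with ⟨rfl, rfl⟩ | ⟨rfl, rfl⟩ <;> simp [hvs]
  · rcases hxy with ⟨rfl, rfl⟩ | ⟨rfl, rfl⟩ <;> simp [hvs]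
  · apply pp_nonneg M hts; omega
  · apply pp_nonneg M hts; omega

theorem sign_neg (w : W) (s : B) (h : cs.length (cs.simple s * w) < cs.length w) :
    NN (- rep cs w⁻¹ (al s)) := by
  have := sign_pos cs (cs.simple s * w) s (by rwa [cs.simple_mul_simple_cancel_left])
  rwa [mul_inv_rev, cs.inv_simple, rep_mul_apply, rep_simple, sig_al_self, map_neg] at this

lemma al_ne_zero (s : B) : al s ≠ 0 := by simp [al]

lemma rep_al_ne_zero (w : W) (s : B) : rep cs w (al s) ≠ 0 := by
  intro h
  have := rep_inv_self cs w (al s)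
  rw [h, map_zero] at this
  exact al_ne_zero s this.symm

lemma NN_antisymm {v : B →₀ ℝ} (h : NN v) (h' : NN (-v)) : v = 0 := by
  ext b; have := h b; have := h' b; simp at *; linarith

end cox
end ATM


namespace ATM
section roots
variable {B : Type*} {M : CoxeterMatrix B} {W : Type*} [Group W] (cs : CoxeterSystem M W)

lemma map_eq_sum {N : Type*} [AddCommGroup N] [Module ℝ N] (f : (B →₀ ℝ) →ₗ[ℝ] N) (v : B →₀ ℝ) :
    f v = v.sum fun s a => a • f (al s) := by
  conv_lhs => rw [← Finsupp.sum_single v]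
  rw [Finsupp.sum, map_sum]
  refine Finset.sum_congr rfl fun s _ => ?_
  change _ = v s • f (al s)
  rw [← map_smul, al, Finsupp.smul_single, smul_eq_mul, mul_one]

/-- sum of the coefficients -/
noncomputable def rho : (B →₀ ℝ) →ₗ[ℝ] ℝ := Finsupp.linearCombination ℝ (fun _ => (1 : ℝ))

lemma rho_eq (v : B →₀ ℝ) : rho v = v.sum fun _ a => a := by
  simp [rho, Finsupp.linearCombination_apply]

lemma rho_al (s : B) : rho (al s) = 1 := by simp [rho, al]

lemma rho_nonneg {v : B →₀ ℝ} (h : NN v) : 0 ≤ rho v := by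
  rw [rho_eq]; exact Finset.sum_nonneg fun i _ => h i

lemma rho_pos {v : B →₀ ℝ} (h : NN v) (h0 : v ≠ 0) : 0 < rho v := by
  rw [rho_eq]
  obtain ⟨b, hb⟩ := Finsupp.ne_iff.mp h0
  refine Finset.sum_pos' (fun i _ => h i) ⟨b, by simpa using hb, lt_of_le_of_ne (h b) (Ne.symm ?_)⟩
  simpa using hb

def IsRoot (β : B →₀ ℝ) : Prop := ∃ w s, β = rep cs w (al s)

variable {cs}

lemma IsRoot.ne_zero {β : B →₀ ℝ} (h : IsRoot cs β) : β ≠ 0 := by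
  obtain ⟨w, s, rfl⟩ := h; exact rep_al_ne_zero cs w s

lemma IsRoot.rep {β : B →₀ ℝ} (h : IsRoot cs β) (u : W) : IsRoot cs (rep cs u β) := by
  obtain ⟨w, s, rfl⟩ := h; exact ⟨u * w, s, by rw [rep_mul_apply]⟩

lemma IsRoot.neg {β : B →₀ ℝ} (h : IsRoot cs β) : IsRoot cs (-β) := by
  obtain ⟨w, s, rfl⟩ := h
  exact ⟨w * cs.simple s, s, by rw [rep_mul_apply, rep_simple, sig_al_self, map_neg]⟩

lemma isRoot_al (cs : CoxeterSystem M W) (s : B) : IsRoot cs (al s) := ⟨1, s, by simp⟩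

lemma IsRoot.dich {β : B →₀ ℝ} (h : IsRoot cs β) :
    (NN β ∧ 0 < rho β) ∨ (NN (-β) ∧ rho β < 0) := by
  have hne := h.ne_zero
  obtain ⟨w, s, rfl⟩ := h
  rcases cs.length_simple_mul w⁻¹ s with h1 | h1
  · left
    have := sign_pos cs w⁻¹ s (by omega)
    rw [inv_inv] at this
    exact ⟨this, rho_pos this hne⟩
  · right
    have := sign_neg cs w⁻¹ s (by omega)
    rw [inv_inv] at this
    refine ⟨this, ?_⟩
    have := rho_pos this (neg_ne_zero.mpr hne)
    rw [map_neg] at this; linarith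

lemma IsRoot.NN_iff {β : B →₀ ℝ} (h : IsRoot cs β) : NN β ↔ 0 < rho β := by
  constructor
  · intro h1; exact rho_pos h1 h.ne_zero
  · intro h1; rcases h.dich with h2 | h2
    · exact h2.1
    · linarith [h2.2]

lemma IsRoot.NN_neg_iff {β : B →₀ ℝ} (h : IsRoot cs β) : NN (-β) ↔ rho β < 0 := by
  rw [h.neg.NN_iff, map_neg]; constructor <;> intro <;> linarith

lemma IsRoot.rho_ne {β : B →₀ ℝ} (h : IsRoot cs β) : rho β ≠ 0 := by
  rcases h.dich with h | h <;> linarith [h.2]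

lemma asc_iff (cs : CoxeterSystem M W) (w : W) (s : B) :
    cs.length w < cs.length (cs.simple s * w) ↔ 0 < rho (rep cs w⁻¹ (al s)) := by
  have hr := (isRoot_al cs s).rep w⁻¹
  constructor
  · intro h; exact hr.NN_iff.mp (sign_pos cs w s h)
  · intro h; by_contra hc
    have := cs.length_simple_mul_ne w s
    have := hr.NN_neg_iff.mp (sign_neg cs w s (by omega))
    linarith

lemma desc_iff (cs : CoxeterSystem M W) (w : W) (s : B) :
    cs.length (cs.simple s * w) < cs.length w ↔ rho (rep cs w⁻¹ (al s)) < 0 := by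
  have hr := (isRoot_al cs s).rep w⁻¹
  have h1 := asc_iff cs w s
  have := cs.length_simple_mul_ne w s
  have := hr.rho_ne
  constructor
  · intro h
    have : ¬ 0 < rho (rep cs w⁻¹ (al s)) := fun h' => by have := h1.mpr h'; omega
    exact lt_of_le_of_ne (not_lt.mp this) ‹_›
  · intro h
    have : ¬ cs.length w < cs.length (cs.simple s * w) := fun h' => by have := h1.mp h'; linarith
    omega

lemma ascR_iff (cs : CoxeterSystem M W) (w : W) (s : B) :
    cs.length w < cs.length (w * cs.simple s) ↔ 0 < rho (rep cs w (al s)) := by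
  have := asc_iff cs w⁻¹ s
  rwa [inv_inv, cs.length_inv, ← cs.length_inv (cs.simple s * w⁻¹), mul_inv_rev, inv_inv,
    cs.inv_simple] at this

lemma descR_iff (cs : CoxeterSystem M W) (w : W) (s : B) :
    cs.length (w * cs.simple s) < cs.length w ↔ rho (rep cs w (al s)) < 0 := by
  have := desc_iff cs w⁻¹ s
  rwa [inv_inv, cs.length_inv, ← cs.length_inv (cs.simple s * w⁻¹), mul_inv_rev, inv_inv,
    cs.inv_simple] at this

/-- a positive root made negative by `s` is proportional to `α_s` -/
lemma root_flip {γ : B →₀ ℝ} (h : IsRoot cs γ) (s : B) (hp : 0 < rho γ)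
    (hn : rho (rep cs (cs.simple s) γ) < 0) : ∃ c : ℝ, 0 < c ∧ γ = c • al s := by
  classical
  have h1 := h.NN_iff.mpr hp
  have h2 := (h.rep (cs.simple s)).NN_neg_iff.mpr hn
  rw [rep_simple, sig_apply] at h2
  have h3 : ∀ b, b ≠ s → γ b = 0 := by
    intro b hb
    have h2b := h2 b
    have : al s b = 0 := by simp [al, hb.symm]
    simp [this] at h2b
    exact le_antisymm h2b (h1 b)
  have h4 : γ = γ s • al s := by
    ext b
    by_cases hb : b = s
    · subst hb; simp [al]
    · have : al s b = 0 := by simp [al, Ne.symm hb]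
      simp [h3 b hb, this]
  refine ⟨γ s, lt_of_le_of_ne (h1 s) ?_, h4⟩
  intro h0
  rw [← h0, zero_smul] at h4
  exact h.ne_zero h4

/-- the product `u v` is length additive -/
def LAdd (cs : CoxeterSystem M W) (u v : W) : Prop :=
  cs.length (u * v) = cs.length u + cs.length v

lemma LAdd.crit {u v : W} (h : LAdd cs u v) {β : B →₀ ℝ} (hβ : IsRoot cs β) (h0 : 0 < rho β)
    (h1 : rho (rep cs u⁻¹ β) < 0) : rho (rep cs (u * v)⁻¹ β) < 0 := by
  induction hn : cs.length v generalizing u v with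
  | zero => rw [cs.length_eq_zero_iff] at hn; subst hn; simpa using h1
  | succ n ih =>
    have hv1 : v ≠ 1 := by rintro rfl; simp at hn
    obtain ⟨s, hs⟩ := cs.exists_leftDescent_of_ne_one hv1
    rw [cs.isLeftDescent_iff] at hs
    have e : u * v = (u * cs.simple s) * (cs.simple s * v) := by
      rw [mul_assoc, cs.simple_mul_simple_cancel_left]
    have l1 := cs.length_mul_le (u * cs.simple s) (cs.simple s * v)
    have l2 := cs.length_mul_le u (cs.simple s)
    rw [cs.length_simple] at l2
    rw [← e, h] at l1
    rw [e]
    refine ih (u := u * cs.simple s) (v := cs.simple s * v) ?_ ?_ (by omega)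
    · rw [LAdd, ← e, h]; omega
    · by_contra hc
      rw [mul_inv_rev, cs.inv_simple, rep_mul_apply] at hc
      have hr : IsRoot cs (rep cs u⁻¹ β) := hβ.rep _
      have hr2 := (hr.rep (cs.simple s)).rho_ne
      obtain ⟨c, hc0, hc1⟩ := root_flip hr.neg s (by rw [map_neg]; linarith)
        (by rw [map_neg, map_neg]; have := lt_of_le_of_ne (not_lt.mp hc) hr2.symm; linarith)
      have h3 : 0 < rho (rep cs u (al s)) := (ascR_iff cs u s).mp (by omega)
      have h4 : β = - (c • rep cs u (al s)) := by
        rw [← map_smul, ← hc1, map_neg, rep_self_inv, neg_neg]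
      rw [h4, map_neg, map_smul, smul_eq_mul] at h0
      nlinarith

lemma LAdd_of_crit {u v : W} (h : ∀ β, IsRoot cs β → 0 < rho β → rho (rep cs u⁻¹ β) < 0 →
    rho (rep cs (u * v)⁻¹ β) < 0) : LAdd cs u v := by
  induction hn : cs.length v generalizing u v with
  | zero => rw [cs.length_eq_zero_iff] at hn; subst hn; simp [LAdd]
  | succ n ih =>
    have hv1 : v ≠ 1 := by rintro rfl; simp at hn
    obtain ⟨s, hs⟩ := cs.exists_leftDescent_of_ne_one hv1
    have hneg := (desc_iff cs v s).mp hs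
    rw [cs.isLeftDescent_iff] at hs
    have e : u * v = (u * cs.simple s) * (cs.simple s * v) := by
      rw [mul_assoc, cs.simple_mul_simple_cancel_left]
    have hus : cs.length (u * cs.simple s) = cs.length u + 1 := by
      rcases cs.length_mul_simple u s with h1 | h1
      · exact h1
      · exfalso
        have h2 := (descR_iff cs u s).mp (by omega)
        have := h (-(rep cs u (al s))) ((isRoot_al cs s).rep u).neg (by rw [map_neg]; linarith)
          (by rw [map_neg, rep_inv_self, map_neg, rho_al]; norm_num)
        rw [mul_inv_rev, rep_mul_apply, map_neg, rep_inv_self, map_neg, map_neg] at this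
        linarith
    have := ih (u := u * cs.simple s) (v := cs.simple s * v) ?_ (by omega)
    · rw [LAdd, ← e] at this
      rw [LAdd]; omega
    · intro β hβ h0 h1
      rw [← e]
      rw [mul_inv_rev, cs.inv_simple, rep_mul_apply] at h1
      have hr : IsRoot cs (rep cs u⁻¹ β) := hβ.rep _
      rcases lt_or_gt_of_ne hr.rho_ne with h2 | h2
      · exact h β hβ h0 h2
      · obtain ⟨c, hc0, hc1⟩ := root_flip hr s h2 h1
        rw [mul_inv_rev, rep_mul_apply, hc1, map_smul, map_smul, smul_eq_mul]
        nlinarith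

section longest
variable {w₀ : W}

lemma w0_desc (hw₀ : ∀ w : W, cs.length w ≤ cs.length w₀) (s : B) :
    cs.length (cs.simple s * w₀) < cs.length w₀ := by
  have := hw₀ (cs.simple s * w₀)
  have := cs.length_simple_mul_ne w₀ s
  omega

lemma w0_neg (hw₀ : ∀ w : W, cs.length w ≤ cs.length w₀) {β : B →₀ ℝ} (hβ : IsRoot cs β)
    (h0 : 0 < rho β) : rho (rep cs w₀⁻¹ β) < 0 := by
  have h1 := hβ.NN_iff.mpr h0
  have : rho (rep cs w₀⁻¹ β) ≤ 0 := by
    have := map_eq_sum (rho ∘ₗ rep cs w₀⁻¹) β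
    rw [LinearMap.comp_apply] at this
    rw [this]
    refine Finset.sum_nonpos fun s _ => ?_
    have h2 := (desc_iff cs w₀ s).mp (w0_desc hw₀ s)
    have h3 := h1 s
    simp only [LinearMap.comp_apply, smul_eq_mul]
    nlinarith
  exact lt_of_le_of_ne this (hβ.rep _).rho_ne

lemma w0_le (hw₀ : ∀ w : W, cs.length w ≤ cs.length w₀) (u : W) : LAdd cs u (u⁻¹ * w₀) := by
  apply LAdd_of_crit
  intro β hβ h0 _
  rw [mul_inv_cancel_left]
  exact w0_neg hw₀ hβ h0

lemma w0_sq (hw₀ : ∀ w : W, cs.length w ≤ cs.length w₀) : w₀ * w₀ = 1 := by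
  have := w0_le hw₀ w₀⁻¹
  rw [LAdd, mul_inv_cancel_left, cs.length_inv, inv_inv] at this
  rw [← cs.length_eq_zero_iff]; omega

end longest
end roots
end ATM


namespace ATM
section weak
variable {B : Type*} {M : CoxeterMatrix B} {W : Type*} [Group W] (cs : CoxeterSystem M W)

/-- left weak divisibility order -/
def Le (u w : W) : Prop := LAdd cs u (u⁻¹ * w)

variable {cs}

lemma Le_iff {u w : W} : Le cs u w ↔ cs.length w = cs.length u + cs.length (u⁻¹ * w) := by
  rw [Le, LAdd, mul_inv_cancel_left]

lemma Le.refl (u : W) : Le cs u u := by simp [Le_iff]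

lemma one_Le (u : W) : Le cs 1 u := by simp [Le_iff]

lemma Le.trans {u v w : W} (h : Le cs u v) (h' : Le cs v w) : Le cs u w := by
  rw [Le_iff] at *
  have h1 := cs.length_mul_le (u⁻¹ * v) (v⁻¹ * w)
  have h2 := cs.length_mul_le u (u⁻¹ * w)
  have e : u⁻¹ * v * (v⁻¹ * w) = u⁻¹ * w := by group
  rw [e] at h1
  rw [mul_inv_cancel_left] at h2
  omega

lemma Le.antisymm {u v : W} (h : Le cs u v) (h' : Le cs v u) : u = v := by
  rw [Le_iff] at *
  have : cs.length (u⁻¹ * v) = 0 := by omega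
  rw [cs.length_eq_zero_iff] at this
  exact (inv_mul_eq_one.mp this)

/-- middle quotients are additive -/
lemma Le.ladd {a b c : W} (h : Le cs a b) (h' : Le cs b c) : LAdd cs (a⁻¹ * b) (b⁻¹ * c) := by
  have h3 := h.trans h'
  rw [Le_iff] at *
  have e : a⁻¹ * b * (b⁻¹ * c) = a⁻¹ * c := by group
  rw [LAdd, e]; omega

lemma LAdd.le {u v : W} (h : LAdd cs u v) : Le cs u (u * v) := by
  rw [LAdd] at h
  rw [Le_iff, inv_mul_cancel_left, h]

lemma LAdd.of_le {u a b : W} (h : LAdd cs u b) (hab : Le cs a b) :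
    LAdd cs u a ∧ Le cs (u * a) (u * b) := by
  have h2 := Le_iff.mp hab
  have h3 := cs.length_mul_le (u * a) (a⁻¹ * b)
  have e : u * a * (a⁻¹ * b) = u * b := by group
  have h4 := cs.length_mul_le u a
  rw [e] at h3
  have e2 : (u * a)⁻¹ * (u * b) = a⁻¹ * b := by group
  simp only [LAdd, Le_iff, e2] at *
  omega

lemma LAdd.le_cancel {u a b : W} (ha : LAdd cs u a) (hb : LAdd cs u b)
    (h : Le cs (u * a) (u * b)) : Le cs a b := by
  have e2 : (u * a)⁻¹ * (u * b) = a⁻¹ * b := by group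
  simp only [LAdd, Le_iff, e2] at *
  omega

lemma simple_Le_iff {s : B} {w : W} : Le cs (cs.simple s) w ↔
    cs.length (cs.simple s * w) < cs.length w := by
  rw [Le_iff, cs.length_simple, cs.inv_simple]
  have := cs.length_simple_mul w s
  omega

lemma exists_simple_Le {w : W} (h : w ≠ 1) : ∃ s, Le cs (cs.simple s) w := by
  obtain ⟨s, hs⟩ := cs.exists_leftDescent_of_ne_one h
  exact ⟨s, simple_Le_iff.mpr hs⟩

/-- Lemma A -/
lemma lemA {s t : B} (hst : s ≠ t) {x : W} (hs : Le cs (cs.simple s) x)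
    (ht : Le cs (cs.simple t) x) (k : ℕ) (hk : M s t = 0 ∨ k ≤ M s t) :
    cs.length ((cs.wordProd (altWord s t k))⁻¹ * x) + k = cs.length x := by
  induction k with
  | zero => simp [altWord]
  | succ k ih =>
    have ih := ih (by omega)
    set y := (cs.wordProd (altWord s t k))⁻¹ * x with hy
    have e : (cs.wordProd (altWord s t (k+1)))⁻¹ * x = cs.simple (nxt s t k) * y := by
      rw [altWord_succ', cs.wordProd_append, cs.wordProd_singleton, mul_inv_rev, cs.inv_simple,
        mul_assoc]
    rw [e]
    have hneg : rho (rep cs y⁻¹ (al (nxt s t k))) < 0 := by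
      refine lt_of_le_of_ne ?_ ((isRoot_al cs _).rep _).rho_ne
      rw [hy, mul_inv_rev, inv_inv, rep_mul_apply, rep_alt_nxt]
      simp only [map_add, map_smul, smul_eq_mul]
      have h1 := (desc_iff cs x s).mp (simple_Le_iff.mp hs)
      have h2 := (desc_iff cs x t).mp (simple_Le_iff.mp ht)
      have h3 := pp_nonneg M hst k (by omega)
      have h4 := pp_nonneg M hst (k+1) hk
      nlinarith
    have h5 := (desc_iff cs y _).mpr hneg
    have h6 := cs.length_simple_mul y (nxt s t k)
    omega

lemma lemA_ne {s t : B} (hst : s ≠ t) {x : W} (hs : Le cs (cs.simple s) x)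
    (ht : Le cs (cs.simple t) x) : M s t ≠ 0 := by
  intro h
  have := lemA hst hs ht (cs.length x + 1) (Or.inl h)
  omega

/-- longest element of the dihedral parabolic -/
def mst (cs : CoxeterSystem M W) (s t : B) : W := cs.wordProd (altWord s t (M s t))

lemma mst_le {s t : B} (hst : s ≠ t) {x : W} (hs : Le cs (cs.simple s) x)
    (ht : Le cs (cs.simple t) x) : Le cs (mst cs s t) x ∧ cs.length (mst cs s t) = M s t := by
  have h1 := lemA hst hs ht (M s t) (Or.inr le_rfl)
  have h2 := cs.length_wordProd_le (altWord s t (M s t))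
  rw [altWord_length] at h2
  have h3 := cs.length_mul_le (mst cs s t) ((mst cs s t)⁻¹ * x)
  rw [mul_inv_cancel_left] at h3
  rw [Le_iff]
  simp only [mst] at *
  omega

lemma mst_comm (s t : B) : mst cs s t = mst cs t s := by
  rw [mst, mst, wordProd_braid, M.symmetric t s]

lemma simple_le_mst {s t : B} (h0 : M s t ≠ 0) (h : cs.length (mst cs s t) = M s t) :
    Le cs (cs.simple s) (mst cs s t) := by
  rw [simple_Le_iff, h]
  obtain ⟨m, hm⟩ : ∃ m, M s t = m + 1 := ⟨M s t - 1, by omega⟩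
  rw [mst, hm, altWord, cs.wordProd_cons, cs.simple_mul_simple_cancel_left]
  have := cs.length_wordProd_le (altWord t s m)
  rw [altWord_length] at this
  omega

def IsJoin (cs : CoxeterSystem M W) (u v j : W) : Prop :=
  Le cs u j ∧ Le cs v j ∧ ∀ x, Le cs u x → Le cs v x → Le cs j x

lemma exists_join_aux (w : W) : ∀ u v, Le cs u w → Le cs v w → ∃ j, Le cs j w ∧ IsJoin cs u v j := by
  induction hn : cs.length w using Nat.strong_induction_on generalizing w with
  | _ n ih =>
  subst hn
  have same : ∀ (s : B) (u v : W), Le cs (cs.simple s) u → Le cs (cs.simple s) v →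
      Le cs u w → Le cs v w → ∃ j, Le cs j w ∧ IsJoin cs u v j := by
    intro s u v hu hv huw hvw
    have hw := hu.trans huw
    have cancel : ∀ x, cs.simple s * ((cs.simple s)⁻¹ * x) = x := fun x => by group
    have hred : ∀ a b, Le cs (cs.simple s) a → Le cs (cs.simple s) b → Le cs a b →
        Le cs ((cs.simple s)⁻¹ * a) ((cs.simple s)⁻¹ * b) := by
      intro a b ha hb hab
      exact LAdd.le_cancel ha hb (by rwa [cancel, cancel])
    have hl := Le_iff.mp hw
    rw [cs.length_simple] at hl
    obtain ⟨j, hjw, hj1, hj2, hj3⟩ := ih _ (by omega) ((cs.simple s)⁻¹ * w) rfl _ _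
      (hred u w hu hw huw) (hred v w hv hw hvw)
    have A := LAdd.of_le hw hjw
    refine ⟨cs.simple s * j, by simpa only [cancel] using A.2, ?_, ?_, ?_⟩
    · have := (LAdd.of_le A.1 hj1).2; rwa [cancel] at this
    · have := (LAdd.of_le A.1 hj2).2; rwa [cancel] at this
    · intro x hux hvx
      have hx := hu.trans hux
      have := (LAdd.of_le hx (hj3 _ (hred u x hu hx hux) (hred v x hv hx hvx))).2
      rwa [cancel] at this
  intro u v hu hv
  by_cases hu1 : u = 1
  · subst hu1; exact ⟨v, hv, one_Le v, Le.refl v, fun x _ h => h⟩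
  by_cases hv1 : v = 1
  · subst hv1; exact ⟨u, hu, Le.refl u, one_Le u, fun x h _ => h⟩
  obtain ⟨s, hs⟩ := exists_simple_Le (cs := cs) hu1
  obtain ⟨t, ht⟩ := exists_simple_Le (cs := cs) hv1
  by_cases hst : s = t
  · subst hst; exact same s u v hs ht hu hv
  have h0 := lemA_ne hst (hs.trans hu) (ht.trans hv)
  obtain ⟨hm, hml⟩ := mst_le hst (hs.trans hu) (ht.trans hv)
  have hsm := simple_le_mst h0 hml
  have htm : Le cs (cs.simple t) (mst cs s t) := by
    rw [mst_comm]; apply simple_le_mst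
    · rwa [M.symmetric]
    · rw [mst_comm, hml, M.symmetric]
  obtain ⟨j1, hj1w, a1, a2, a3⟩ := same s u (mst cs s t) hs hsm hu hm
  obtain ⟨j2, hj2w, b1, b2, b3⟩ := same t v (mst cs s t) ht htm hv hm
  obtain ⟨j, hjw, c1, c2, c3⟩ := same s j1 j2 (hsm.trans a2) (hsm.trans b2) hj1w hj2w
  refine ⟨j, hjw, a1.trans c1, b1.trans c2, fun x hux hvx => ?_⟩
  have hmx := (mst_le hst (hs.trans hux) (ht.trans hvx)).1
  exact c3 x (a3 x hux hmx) (b3 x hvx hmx)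

lemma exists_longest (cs : CoxeterSystem M W) [Finite W] :
    ∃ w₀ : W, ∀ w, cs.length w ≤ cs.length w₀ := Finite.exists_max cs.length

lemma exists_join (cs : CoxeterSystem M W) [Finite W] (u v : W) : ∃ j, IsJoin cs u v j := by
  obtain ⟨w₀, h⟩ := exists_longest cs
  obtain ⟨j, -, hj⟩ := exists_join_aux w₀ u v (w0_le h u) (w0_le h v)
  exact ⟨j, hj⟩

lemma M_ne_zero (cs : CoxeterSystem M W) [Finite W] {s t : B} (hst : s ≠ t) :
    M s t ≠ 0 ∧ cs.length (mst cs s t) = M s t := by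
  obtain ⟨w₀, h⟩ := exists_longest cs
  exact ⟨lemA_ne hst (w0_le h (cs.simple s)) (w0_le h (cs.simple t)),
    (mst_le hst (w0_le h (cs.simple s)) (w0_le h (cs.simple t))).2⟩

noncomputable def jn (cs : CoxeterSystem M W) [Finite W] (u v : W) : W :=
  Classical.choose (exists_join cs u v)

lemma jn_spec (cs : CoxeterSystem M W) [Finite W] (u v : W) : IsJoin cs u v (jn cs u v) :=
  Classical.choose_spec (exists_join cs u v)

variable [Finite W]

lemma le_jn_left (u v : W) : Le cs u (jn cs u v) := (jn_spec cs u v).1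
lemma le_jn_right (u v : W) : Le cs v (jn cs u v) := (jn_spec cs u v).2.1
lemma jn_le {u v x : W} (h : Le cs u x) (h' : Le cs v x) : Le cs (jn cs u v) x :=
  (jn_spec cs u v).2.2 x h h'

lemma jn_comm (u v : W) : jn cs u v = jn cs v u :=
  Le.antisymm (jn_le (le_jn_right v u) (le_jn_left v u)) (jn_le (le_jn_right u v) (le_jn_left u v))

lemma jn_of_le {u v : W} (h : Le cs u v) : jn cs u v = v :=
  Le.antisymm (jn_le h (Le.refl v)) (le_jn_right u v)

lemma jn_mul {u a b : W} (ha : LAdd cs u a) (hb : LAdd cs u b) :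
    jn cs (u * a) (u * b) = u * jn cs a b ∧ LAdd cs u (jn cs a b) := by
  set J := jn cs (u * a) (u * b) with hJ
  have cancel : u * (u⁻¹ * J) = J := by group
  have h1 : Le cs u J := (LAdd.le ha).trans (le_jn_left _ _)
  have h2 : Le cs a (u⁻¹ * J) := LAdd.le_cancel ha h1 (by rw [cancel]; exact le_jn_left _ _)
  have h3 : Le cs b (u⁻¹ * J) := LAdd.le_cancel hb h1 (by rw [cancel]; exact le_jn_right _ _)
  have h4 := LAdd.of_le h1 (jn_le h2 h3)
  refine ⟨?_, h4.1⟩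
  rw [cancel] at h4
  exact Le.antisymm (jn_le (LAdd.of_le h4.1 (le_jn_left a b)).2 (LAdd.of_le h4.1 (le_jn_right a b)).2)
    h4.2

/-- complement: `u * cm u v = jn u v` -/
noncomputable def cm (cs : CoxeterSystem M W) (u v : W) : W := u⁻¹ * jn cs u v

lemma mul_cm (u v : W) : u * cm cs u v = jn cs u v := by rw [cm, mul_inv_cancel_left]

lemma cm_ladd (u v : W) : LAdd cs u (cm cs u v) := le_jn_left u v

lemma cm_self (u : W) : cm cs u u = 1 := by
  rw [cm, jn_of_le (Le.refl u), inv_mul_cancel]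

lemma cm_one (u : W) : cm cs u 1 = 1 := by
  rw [cm, jn_comm, jn_of_le (one_Le u), inv_mul_cancel]

lemma one_cm (u : W) : cm cs 1 u = u := by
  rw [cm, jn_of_le (one_Le u), inv_one, one_mul]

lemma jn_cm_aux {u v : W} (h : LAdd cs u v) (w : W) :
    jn cs (u * v) w = u * jn cs v (cm cs u w) := by
  rw [← (jn_mul h (cm_ladd u w)).1, mul_cm]
  exact Le.antisymm
    (jn_le (le_jn_left _ _) ((le_jn_right u w).trans (le_jn_right _ _)))
    (jn_le (le_jn_left _ _) (jn_le (h.le.trans (le_jn_left _ _)) (le_jn_right _ _)))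

lemma cm_mul_left {u v : W} (h : LAdd cs u v) (w : W) :
    cm cs (u * v) w = cm cs v (cm cs u w) := by
  rw [cm, jn_cm_aux h, mul_inv_rev, mul_assoc, inv_mul_cancel_left]; rfl

lemma cm_mul_right {u v : W} (h : LAdd cs u v) (w : W) :
    cm cs w (u * v) = cm cs w u * cm cs (cm cs u w) v ∧
      LAdd cs (cm cs w u) (cm cs (cm cs u w) v) := by
  have e : jn cs w (u * v) = jn cs w u * cm cs (cm cs u w) v := by
    rw [jn_comm, jn_cm_aux h, jn_comm v, ← mul_cm (cm cs u w), ← mul_assoc, mul_cm, jn_comm u]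
  have e2 : cm cs (cm cs u w) v = (jn cs w u)⁻¹ * jn cs w (u * v) := by rw [e]; group
  constructor
  · rw [cm, e, ← mul_assoc]; rfl
  · rw [e2]
    exact Le.ladd (le_jn_left w u) (jn_le (le_jn_left _ _) (h.le.trans (le_jn_right _ _)))

end weak
end ATM


namespace ATM
section monoid
variable {B : Type*} {M : CoxeterMatrix B} {W : Type*} [Group W] (cs : CoxeterSystem M W)

/-- the class of a word -/
def mkw (M : CoxeterMatrix B) (l : List B) : ArtinTitsMonoid M :=
  (braidCon M).mk' (FreeMonoid.ofList l)

lemma mkw_nil : mkw M [] = 1 := rfl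

lemma mkw_append (l l' : List B) : mkw M (l ++ l') = mkw M l * mkw M l' := rfl

lemma mkw_cons (s : B) (l : List B) : mkw M (s :: l) = mkw M [s] * mkw M l := rfl

lemma mkw_surj (b : ArtinTitsMonoid M) : ∃ l, b = mkw M l := by
  obtain ⟨l, hl⟩ := (braidCon M).mk'_surjective b
  exact ⟨FreeMonoid.toList l, hl.symm⟩

lemma mkw_braid {s t : B} (hst : s ≠ t) (h0 : M s t ≠ 0) :
    mkw M (altWord s t (M s t)) = mkw M (altWord t s (M s t)) := by
  refine ((braidCon M).eq).mpr ?_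
  exact ConGen.Rel.of _ _ ⟨s, t, hst, h0, rfl, rfl⟩

lemma bind {p : ArtinTitsMonoid M → Prop} (h1 : p 1)
    (hs : ∀ s b, p b → p (mkw M [s] * b)) (b) : p b := by
  obtain ⟨l, rfl⟩ := mkw_surj b
  induction l with
  | nil => exact h1
  | cons s l ih => rw [mkw_cons]; exact hs s _ ih

section lift
variable {G : Type*} [Monoid G]

def BraidLift (M : CoxeterMatrix B) (f : B → G) : Prop := ∀ s t, s ≠ t → M s t ≠ 0 →
    ((altWord s t (M s t)).map f).prod = ((altWord t s (M s t)).map f).prod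

def liftB (f : B → G) (h : BraidLift M f) : ArtinTitsMonoid M →* G :=
  (braidCon M).lift (FreeMonoid.lift f) (by
    refine Con.conGen_le.mpr ?_
    rintro a b ⟨s, t, hst, h0, rfl, rfl⟩
    rw [Con.ker_rel, FreeMonoid.lift_apply, FreeMonoid.lift_apply]
    exact h s t hst h0)

lemma liftB_mkw (f : B → G) (h : BraidLift M f) (l : List B) :
    liftB f h (mkw M l) = (l.map f).prod := by
  rw [mkw, liftB]
  exact ((braidCon M).lift_mk' _ _).trans (by rw [FreeMonoid.lift_apply]; rfl)

end lift

lemma braidLift_len (M : CoxeterMatrix B) :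
    BraidLift M (fun _ => Multiplicative.ofAdd (1 : ℕ)) := by
  intro s t _ _; simp [altWord_length]

def lenHom (M : CoxeterMatrix B) : ArtinTitsMonoid M →* Multiplicative ℕ :=
  liftB (fun _ => Multiplicative.ofAdd 1) (braidLift_len M)

def len (b : ArtinTitsMonoid M) : ℕ := (lenHom M b).toAdd

lemma len_mul (a b : ArtinTitsMonoid M) : len (a * b) = len a + len b := by simp [len]

lemma len_mkw (l : List B) : len (mkw M l) = l.length := by
  rw [len, lenHom, liftB_mkw]; simp [← ofAdd_nsmul]

lemma len_one : len (1 : ArtinTitsMonoid M) = 0 := len_mkw []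

lemma eq_one_of_len {b : ArtinTitsMonoid M} (h : len b = 0) : b = 1 := by
  obtain ⟨l, rfl⟩ := mkw_surj b
  rw [len_mkw, List.length_eq_zero_iff] at h
  subst h; rfl

lemma len_pow (b : ArtinTitsMonoid M) (n : ℕ) : len (b ^ n) = n * len b := by
  induction n with
  | zero => simp [len_one]
  | succ n ih => rw [pow_succ, len_mul, ih]; ring

lemma braidLift_simple : BraidLift M cs.simple := by
  intro s t _ _; exact wordProd_braid cs s t

def projW : ArtinTitsMonoid M →* W := liftB cs.simple (braidLift_simple cs)

lemma projW_mkw (l : List B) : projW cs (mkw M l) = cs.wordProd l := liftB_mkw _ _ l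

variable {cs}

/-- Matsumoto -/
lemma matsumoto : ∀ (n : ℕ) (l l' : List B), l.length = n → cs.IsReduced l → cs.IsReduced l' →
    cs.wordProd l = cs.wordProd l' → mkw M l = mkw M l' := by
  intro n
  induction n with
  | zero =>
    intro l l' hl h h' e
    rw [CoxeterSystem.IsReduced, hl, e] at h
    rw [CoxeterSystem.IsReduced] at h'
    have : l'.length = 0 := by omega
    rw [List.length_eq_zero_iff] at hl this
    rw [hl, this]
  | succ n ih =>
    have same : ∀ s l l', l.length = n → cs.IsReduced (s :: l) → cs.IsReduced (s :: l') →
        cs.wordProd (s :: l) = cs.wordProd (s :: l') → mkw M (s :: l) = mkw M (s :: l') := by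
      intro s l l' hl h h' e
      rw [cs.wordProd_cons, cs.wordProd_cons] at e
      have h1 : cs.IsReduced l := by simpa using h.drop 1
      have h2 : cs.IsReduced l' := by simpa using h'.drop 1
      rw [mkw_cons, mkw_cons s l', ih l l' hl h1 h2 (mul_left_cancel e)]
    intro l l' hl h h' e
    have hl' : l'.length = n + 1 := by rw [CoxeterSystem.IsReduced, e] at h; rw [CoxeterSystem.IsReduced] at h'; omega
    match l, l', hl, hl' with
    | s :: l1, t :: l1', hl, hl' =>
    simp only [List.length_cons, add_left_inj] at hl hl'
    by_cases hst : s = t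
    · subst hst; exact same s l1 l1' hl h h' e
    set w := cs.wordProd (s :: l1) with hw
    have hsw : Le cs (cs.simple s) w := by
      rw [simple_Le_iff, h, hw, cs.wordProd_cons, cs.simple_mul_simple_cancel_left]
      have := cs.length_wordProd_le l1
      simp; omega
    have htw : Le cs (cs.simple t) w := by
      rw [simple_Le_iff, e, h', cs.wordProd_cons, cs.simple_mul_simple_cancel_left]
      have := cs.length_wordProd_le l1'
      simp; omega
    have h0 := lemA_ne hst hsw htw
    obtain ⟨hm, hml⟩ := mst_le hst hsw htw
    obtain ⟨q, hq, hqw⟩ := cs.exists_isReduced ((mst cs s t)⁻¹ * w)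
    have e1 : cs.wordProd (altWord s t (M s t) ++ q) = w := by
      rw [cs.wordProd_append, ← hqw, ← mst, mul_inv_cancel_left]
    have e2 : cs.wordProd (altWord t s (M s t) ++ q) = w := by
      rw [cs.wordProd_append, ← hqw, ← wordProd_braid, ← mst, mul_inv_cancel_left]
    have hL := Le_iff.mp hm
    rw [hml, hqw, hq.eq] at hL
    have r1 : cs.IsReduced (altWord s t (M s t) ++ q) := by
      rw [CoxeterSystem.IsReduced, e1, hL, List.length_append, altWord_length]
    have r2 : cs.IsReduced (altWord t s (M s t) ++ q) := by
      rw [CoxeterSystem.IsReduced, e2, hL, List.length_append, altWord_length]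
    have hbr : mkw M (altWord s t (M s t) ++ q) = mkw M (altWord t s (M s t) ++ q) := by
      rw [mkw_append, mkw_append, mkw_braid hst h0]
    obtain ⟨m, hm'⟩ : ∃ m, M s t = m + 1 := ⟨M s t - 1, by omega⟩
    rw [hm'] at r1 r2 e1 e2 hbr
    simp only [altWord, List.cons_append] at r1 r2 e1 e2 hbr
    rw [same s l1 _ hl h r1 (by rw [e1]), hbr, same t l1' _ hl' h' r2 (by rw [e2, ← e])]

noncomputable def r (cs : CoxeterSystem M W) (w : W) : ArtinTitsMonoid M :=
  mkw M (Classical.choose (cs.exists_isReduced w))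

lemma r_eq {l : List B} (h : cs.IsReduced l) : r cs (cs.wordProd l) = mkw M l := by
  have := Classical.choose_spec (cs.exists_isReduced (cs.wordProd l))
  exact matsumoto _ _ _ rfl this.1 h this.2.symm

lemma r_one : r cs (1 : W) = 1 := by
  have : cs.IsReduced [] := by simp [CoxeterSystem.IsReduced]
  have := r_eq this
  rwa [cs.wordProd_nil] at this

lemma r_simple (s : B) : r cs (cs.simple s) = mkw M [s] := by
  have : cs.IsReduced [s] := by simp [CoxeterSystem.IsReduced]
  have := r_eq this
  rwa [cs.wordProd_singleton] at this

lemma r_mul {u v : W} (h : LAdd cs u v) : r cs u * r cs v = r cs (u * v) := by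
  obtain ⟨l, hl, rfl⟩ := cs.exists_isReduced u
  obtain ⟨l', hl', rfl⟩ := cs.exists_isReduced v
  have : cs.IsReduced (l ++ l') := by
    rw [CoxeterSystem.IsReduced, cs.wordProd_append, h, hl.eq, hl'.eq, List.length_append]
  rw [r_eq hl, r_eq hl', ← mkw_append, ← cs.wordProd_append, r_eq this]

lemma projW_r (w : W) : projW cs (r cs w) = w := by
  have := Classical.choose_spec (cs.exists_isReduced w)
  rw [r, projW_mkw]; exact this.2.symm

lemma len_r (w : W) : len (r cs w) = cs.length w := by
  have := Classical.choose_spec (cs.exists_isReduced w)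
  rw [r, len_mkw, ← this.1.eq, ← this.2]

lemma length_projW_le (b : ArtinTitsMonoid M) : cs.length (projW cs b) ≤ len b := by
  obtain ⟨l, rfl⟩ := mkw_surj b
  rw [projW_mkw, len_mkw]; exact cs.length_wordProd_le l

lemma eq_r_of_len {b : ArtinTitsMonoid M} (h : len b = cs.length (projW cs b)) :
    b = r cs (projW cs b) := by
  obtain ⟨l, rfl⟩ := mkw_surj b
  rw [projW_mkw, len_mkw] at *
  exact (r_eq h.symm).symm

/-- divisors of simple elements are simple -/
lemma factor_simple {a b : ArtinTitsMonoid M} {w : W} (h : a * b = r cs w) :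
    ∃ u v, a = r cs u ∧ b = r cs v ∧ u * v = w ∧ LAdd cs u v := by
  have h1 := congrArg len h
  have h2 := congrArg (projW cs) h
  rw [len_mul, len_r] at h1
  rw [map_mul, projW_r] at h2
  have h3 := cs.length_mul_le (projW cs a) (projW cs b)
  have h4 := length_projW_le (cs := cs) a
  have h5 := length_projW_le (cs := cs) b
  rw [h2] at h3
  refine ⟨projW cs a, projW cs b, eq_r_of_len (by omega), eq_r_of_len (by omega), h2, ?_⟩
  rw [LAdd, h2]; omega

lemma dvd_antisymm' {a b : ArtinTitsMonoid M} (h : a ∣ b) (h' : b ∣ a) :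
    a = b := by
  obtain ⟨c, rfl⟩ := h
  obtain ⟨d, hd⟩ := h'
  have := congrArg len hd
  rw [len_mul, len_mul] at this
  rw [eq_one_of_len (b := c) (by omega), mul_one]

/-! ### the transducer -/
section trans
variable [Finite W]

lemma unop_mul_app {X : Type*} (a b : (Function.End X)ᵐᵒᵖ) (p : X) :
    (a * b).unop p = b.unop (a.unop p) := rfl

noncomputable def tr (cs : CoxeterSystem M W) (s : B) :
    (Function.End (ArtinTitsMonoid M × W))ᵐᵒᵖ :=
  MulOpposite.op fun p => (p.1 * r cs (cm cs p.2 (cs.simple s)), cm cs (cs.simple s) p.2)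

lemma tr_word (l : List B) (hl : cs.IsReduced l) (c : ArtinTitsMonoid M) (w : W) :
    ((l.map (tr cs)).prod).unop (c, w) =
      (c * r cs (cm cs w (cs.wordProd l)), cm cs (cs.wordProd l) w) := by
  induction l generalizing c w with
  | nil =>
    simp only [List.map_nil, List.prod_nil, cs.wordProd_nil, cm_one, r_one, mul_one, one_cm]
    rfl
  | cons s l ih =>
    have h1 : cs.IsReduced l := by simpa using hl.drop 1
    have hadd : LAdd cs (cs.simple s) (cs.wordProd l) := by
      rw [LAdd, ← cs.wordProd_cons, hl.eq, h1.eq, cs.length_simple, List.length_cons, add_comm]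
    obtain ⟨e1, e2⟩ := cm_mul_right hadd w
    rw [List.map_cons, List.prod_cons, unop_mul_app, cs.wordProd_cons, e1, ← r_mul e2, cm_mul_left hadd, ← mul_assoc]
    exact ih h1 _ _

lemma braidLift_tr (cs : CoxeterSystem M W) : BraidLift M (tr cs) := by
  intro s t hst h0
  apply MulOpposite.unop_injective
  funext ⟨c, w⟩
  have h1 := (M_ne_zero cs hst).2
  have h2 := (M_ne_zero cs hst.symm).2
  rw [mst] at h1 h2
  rw [M.symmetric t s] at h2
  rw [tr_word _ (by rw [CoxeterSystem.IsReduced, h1, altWord_length]),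
    tr_word _ (by rw [CoxeterSystem.IsReduced, h2, altWord_length]), wordProd_braid]

noncomputable def trHom (cs : CoxeterSystem M W) :
    ArtinTitsMonoid M →* (Function.End (ArtinTitsMonoid M × W))ᵐᵒᵖ :=
  liftB (tr cs) (braidLift_tr cs)

noncomputable def lc (cs : CoxeterSystem M W) (w : W) (b : ArtinTitsMonoid M) : ArtinTitsMonoid M :=
  ((trHom cs b).unop (1, w)).1

noncomputable def rc (cs : CoxeterSystem M W) (b : ArtinTitsMonoid M) (w : W) : W :=
  ((trHom cs b).unop (1, w)).2

lemma trHom_apply (b : ArtinTitsMonoid M) (c : ArtinTitsMonoid M) (w : W) :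
    (trHom cs b).unop (c, w) = (c * lc cs w b, rc cs b w) := by
  suffices h : ∀ c, (trHom cs b).unop (c, w) = (c * ((trHom cs b).unop (1, w)).1,
      ((trHom cs b).unop (1, w)).2) from h c
  induction b using bind generalizing w with
  | h1 =>
    intro c; rw [map_one]
    change (c, w) = (c * 1, w)
    rw [mul_one]
  | hs s b ih =>
    intro c
    have hs : ∀ c w, (trHom cs (mkw M [s])).unop (c, w) =
      (c * r cs (cm cs w (cs.simple s)), cm cs (cs.simple s) w) := by
      intro c w; rw [trHom, liftB_mkw, List.map_singleton, List.prod_singleton]; rfl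
    rw [map_mul, unop_mul_app, unop_mul_app, hs, hs, ih, ih _ (1 * _)]
    simp [mul_assoc]

lemma lc_mul (w : W) (a b : ArtinTitsMonoid M) :
    lc cs w (a * b) = lc cs w a * lc cs (rc cs a w) b := by
  rw [lc, map_mul, unop_mul_app,
    trHom_apply a, trHom_apply b, one_mul]

lemma rc_mul (w : W) (a b : ArtinTitsMonoid M) : rc cs (a * b) w = rc cs b (rc cs a w) := by
  rw [rc, map_mul, unop_mul_app,
    trHom_apply a, trHom_apply b]

lemma lc_rc_r (u w : W) : lc cs w (r cs u) = r cs (cm cs w u) ∧ rc cs (r cs u) w = cm cs u w := by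
  obtain ⟨l, hl, rfl⟩ := cs.exists_isReduced u
  have := tr_word l hl 1 w
  rw [r_eq hl, lc, rc, trHom, liftB_mkw, this]
  simp

lemma lc_one (w : W) : lc cs w 1 = 1 := by
  have := (lc_rc_r (cs := cs) 1 w).1; rwa [r_one, cm_one, r_one] at this

lemma rc_one (w : W) : rc cs 1 w = w := by
  have := (lc_rc_r (cs := cs) 1 w).2; rwa [r_one, one_cm] at this

lemma mul_r_rc (b : ArtinTitsMonoid M) (w : W) : b * r cs (rc cs b w) = r cs w * lc cs w b := by
  induction b using bind generalizing w with
  | h1 => rw [rc_one, lc_one, one_mul, mul_one]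
  | hs s b ih =>
    rw [rc_mul, lc_mul, mul_assoc, ih, ← mul_assoc, ← mul_assoc, ← r_simple (cs := cs),
      (lc_rc_r _ _).1, (lc_rc_r _ _).2, r_mul (cm_ladd _ _), r_mul (cm_ladd _ _), mul_cm, mul_cm,
      jn_comm]

lemma rc_at_one (b : ArtinTitsMonoid M) : rc cs b 1 = 1 := by
  induction b using bind with
  | h1 => exact rc_one 1
  | hs s b ih => rw [rc_mul, ← r_simple (cs := cs), (lc_rc_r _ _).2, cm_one, ih]

lemma lc_at_one (b : ArtinTitsMonoid M) : lc cs 1 b = b := by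
  have := mul_r_rc (cs := cs) b 1
  rwa [rc_at_one, r_one, mul_one, one_mul, eq_comm] at this

lemma lc_r_mul (w : W) (b : ArtinTitsMonoid M) : lc cs w (r cs w * b) = b := by
  rw [lc_mul, (lc_rc_r _ _).1, (lc_rc_r _ _).2, cm_self, r_one, one_mul, lc_at_one]

lemma left_cancel (cs : CoxeterSystem M W) {a b c : ArtinTitsMonoid M} (h : a * b = a * c) :
    b = c := by
  induction a using bind with
  | h1 => rwa [one_mul, one_mul] at h
  | hs s a ih =>
    apply ih
    have := congrArg (lc cs (cs.simple s)) h
    rwa [← r_simple (cs := cs), mul_assoc, mul_assoc, lc_r_mul, lc_r_mul] at this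

lemma r_dvd_iff {w : W} {c : ArtinTitsMonoid M} : r cs w ∣ c ↔ rc cs c w = 1 := by
  constructor
  · rintro ⟨d, rfl⟩
    rw [rc_mul, (lc_rc_r _ _).2, cm_self, rc_at_one]
  · intro h
    have := mul_r_rc (cs := cs) c w
    rw [h, r_one, mul_one] at this
    exact ⟨_, this⟩

/-- every two elements have a least common right-multiple -/
lemma exists_lcm (cs : CoxeterSystem M W) (a b : ArtinTitsMonoid M) :
    ∃ j, a ∣ j ∧ b ∣ j ∧ ∀ x, a ∣ x → b ∣ x → j ∣ x := by
  induction a using bind generalizing b with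
  | h1 => exact ⟨b, one_dvd b, dvd_rfl, fun x _ h => h⟩
  | hs s a ih =>
    rw [← r_simple (cs := cs)]
    set w := cs.simple s
    -- `b * r (rc b w) = r w * lc w b`
    obtain ⟨j, ⟨c, hc⟩, ⟨d, hd⟩, h3⟩ := ih (lc cs w b)
    refine ⟨r cs w * j, ⟨c, by rw [hc, mul_assoc]⟩, ⟨r cs (rc cs b w) * d, ?_⟩, ?_⟩
    · rw [← mul_assoc, mul_r_rc, mul_assoc, ← hd]
    · rintro x ⟨e, he⟩ ⟨f, hf⟩
      have hw : r cs w ∣ x := ⟨a * e, by rw [he, mul_assoc]⟩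
      rw [r_dvd_iff, hf, rc_mul, ← r_dvd_iff] at hw
      obtain ⟨g, hg⟩ := hw
      have hx : x = r cs w * (lc cs w b * g) := by rw [hf, hg, ← mul_assoc, ← mul_assoc, mul_r_rc]
      obtain ⟨k, hk⟩ := h3 (lc cs w b * g)
        ⟨e, left_cancel cs (a := r cs w) (by rw [← hx, he, mul_assoc])⟩ ⟨g, rfl⟩
      exact ⟨k, by rw [hx, hk, mul_assoc]⟩

/-- gcd of a nonempty set -/
lemma exists_gcd (cs : CoxeterSystem M W) (T : Set (ArtinTitsMonoid M)) (hT : T.Nonempty) :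
    ∃ g, (∀ x ∈ T, g ∣ x) ∧ ∀ c, (∀ x ∈ T, c ∣ x) → c ∣ g := by
  obtain ⟨x0, hx0⟩ := hT
  have hb : ∀ g, (∀ x ∈ T, g ∣ x) → len g ≤ len x0 := by
    intro g hg
    obtain ⟨d, hd⟩ := hg x0 hx0
    rw [hd, len_mul]; omega
  classical
  have hex : ∃ n, ∃ g, (∀ x ∈ T, g ∣ x) ∧ len g + n = len x0 :=
    ⟨len x0, 1, fun x _ => one_dvd x, by rw [len_one, zero_add]⟩
  obtain ⟨g, hg, hgl⟩ := Nat.find_spec hex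
  refine ⟨g, hg, fun c hc => ?_⟩
  obtain ⟨j, h1, ⟨d, hd⟩, h3⟩ := exists_lcm cs c g
  have hj : ∀ x ∈ T, j ∣ x := fun x hx => h3 x (hc x hx) (hg x hx)
  have hjl := hb j hj
  have : Nat.find hex ≤ len x0 - len j := Nat.find_min' hex ⟨j, hj, by omega⟩
  have h5 := congrArg len hd
  rw [len_mul] at h5
  rw [eq_one_of_len (b := d) (by omega), mul_one] at hd
  rwa [← hd]

end trans

section garside
variable {w₀ : W}

lemma r_w0_dvd (hw₀ : ∀ w : W, cs.length w ≤ cs.length w₀) (u : W) :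
    r cs u * r cs (u⁻¹ * w₀) = r cs w₀ := by
  rw [r_mul (w0_le hw₀ u), mul_inv_cancel_left]

lemma r_mul_Δ (hw₀ : ∀ w : W, cs.length w ≤ cs.length w₀) (u : W) :
    r cs u * r cs w₀ = r cs w₀ * r cs (w₀ * u * w₀) := by
  have h1 := r_w0_dvd hw₀ (u⁻¹ * w₀)
  have h2 := inv_eq_of_mul_eq_one_left (w0_sq hw₀)
  rw [mul_inv_rev, inv_inv, h2] at h1
  calc r cs u * r cs w₀ = r cs u * (r cs (u⁻¹ * w₀) * r cs (w₀ * u * w₀)) := by rw [h1]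
    _ = _ := by rw [← mul_assoc, r_w0_dvd hw₀ u]

lemma D_central (hw₀ : ∀ w : W, cs.length w ≤ cs.length w₀) (b : ArtinTitsMonoid M) :
    Commute b (r cs w₀ ^ 2) := by
  induction b using bind with
  | h1 => exact Commute.one_left _
  | hs s b ih =>
    refine Commute.mul_left ?_ ih
    rw [← r_simple (cs := cs), commute_iff_eq, pow_two, ← mul_assoc, r_mul_Δ hw₀, mul_assoc,
      r_mul_Δ hw₀, ← mul_assoc]
    congr 2
    have := w0_sq hw₀
    calc w₀ * (w₀ * cs.simple s * w₀) * w₀ = (w₀ * w₀) * cs.simple s * (w₀ * w₀) := by group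
      _ = _ := by rw [this]; group

lemma exists_mul_eq_D (hw₀ : ∀ w : W, cs.length w ≤ cs.length w₀) (b : ArtinTitsMonoid M) :
    ∃ k c, b * c = (r cs w₀ ^ 2) ^ k := by
  induction b using bind with
  | h1 => exact ⟨0, 1, by simp⟩
  | hs s b ih =>
    obtain ⟨k, c, h⟩ := ih
    have h1 := r_w0_dvd hw₀ (cs.simple s)
    refine ⟨k + 1, c * (r cs ((cs.simple s)⁻¹ * w₀) * r cs w₀), ?_⟩
    have hc := (D_central hw₀ (mkw M [s])).pow_right k
    rw [mul_assoc, ← mul_assoc b, h, ← mul_assoc, hc.eq, mul_assoc, ← mul_assoc (mkw M [s]),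
      ← r_simple (cs := cs), h1, ← pow_two, pow_succ _ k]

lemma exists_conj_Δ (hw₀ : ∀ w : W, cs.length w ≤ cs.length w₀) (b : ArtinTitsMonoid M) :
    ∃ b', b * r cs w₀ = r cs w₀ * b' := by
  induction b using bind with
  | h1 => exact ⟨1, by simp⟩
  | hs s b ih =>
    obtain ⟨b', h⟩ := ih
    refine ⟨r cs (w₀ * cs.simple s * w₀) * b', ?_⟩
    rw [mul_assoc, h, ← mul_assoc, ← r_simple (cs := cs), r_mul_Δ hw₀, mul_assoc]

lemma exists_conj_Δ' [Finite W] (hw₀ : ∀ w : W, cs.length w ≤ cs.length w₀)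
    (b : ArtinTitsMonoid M) : ∃ b', r cs w₀ * b = b' * r cs w₀ := by
  obtain ⟨b', h⟩ := exists_conj_Δ hw₀ b
  obtain ⟨b'', h'⟩ := exists_conj_Δ hw₀ b'
  refine ⟨b', ?_⟩
  have hc := (D_central hw₀ b).eq
  have : r cs w₀ * (r cs w₀ * b'') = r cs w₀ * (r cs w₀ * b) := by
    rw [← h', ← mul_assoc, ← h, mul_assoc, ← pow_two, hc, pow_two, mul_assoc]
  rw [h', left_cancel cs (left_cancel cs this)]

end garside
end monoid
end ATM


namespace ATM
universe u

/-! ## the group of fractions -/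
section fractions

open OreLocalization in
lemma exists_group {Q : Type u} [Monoid Q] (D : Q) (hD : ∀ b, Commute b D)
    (hc : ∀ b c : Q, D * b = D * c → b = c) (hdiv : ∀ b : Q, ∃ k c, b * c = D ^ k ∧ c * b = D ^ k) :
    ∃ (Γ : Type u) (_ : Group Γ) (ι : Q →* Γ), Function.Injective ι ∧
      ∀ γ : Γ, ∃ k b, ι D ^ k * γ = ι b := by
  let S := Submonoid.powers D
  have hS : ∀ (s : S) (b : Q), (s : Q) * b = b * s := by
    rintro ⟨_, k, rfl⟩ b
    exact (((hD b).pow_right k).eq).symm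
  have hSc : ∀ (s : S) (b c : Q), (s : Q) * b = s * c → b = c := by
    rintro ⟨_, k, rfl⟩ b c h
    simp only at h
    induction k with
    | zero => simpa using h
    | succ k ih =>
      rw [pow_succ', mul_assoc, mul_assoc] at h
      exact ih (hc _ _ h)
  let _ : OreSet S :=
    { ore_right_cancel := fun r₁ r₂ s h => ⟨s, by rw [hS, hS, h]⟩
      oreNum := fun r _ => r
      oreDenom := fun _ s => s
      ore_eq := fun r s => hS s r }
  have hunit : ∀ b : Q, IsUnit (numeratorHom b : OreLocalization S Q) := by
    intro b
    obtain ⟨k, c, h1, h2⟩ := hdiv b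
    have hu : IsUnit (numeratorHom (D ^ k) : OreLocalization S Q) :=
      numerator_isUnit (⟨D ^ k, k, rfl⟩ : S)
    obtain ⟨u, hu⟩ := hu
    have e1 : (numeratorHom b : OreLocalization S Q) * (numeratorHom c : OreLocalization S Q) = ↑u := by
      rw [← map_mul, h1]; exact hu.symm
    have e2 : (numeratorHom c : OreLocalization S Q) * (numeratorHom b : OreLocalization S Q) = ↑u := by
      rw [← map_mul, h2]; exact hu.symm
    have e3 : ((↑u⁻¹ : OreLocalization S Q) * numeratorHom c : OreLocalization S Q) * (numeratorHom b : OreLocalization S Q) = 1 := by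
      rw [mul_assoc, e2, Units.inv_mul]
    have e4 : (numeratorHom b : OreLocalization S Q) * ((numeratorHom c : OreLocalization S Q) * (↑u⁻¹ : OreLocalization S Q)) = 1 := by
      rw [← mul_assoc, e1, Units.mul_inv]
    have e5 := left_inv_eq_right_inv e3 e4
    exact ⟨⟨numeratorHom b, _, e4, by rw [← e5]; exact e3⟩, rfl⟩
  have hexp : ∀ γ : OreLocalization S Q, ∃ k b, (numeratorHom D) ^ k * γ = numeratorHom b := by
    intro γ
    induction γ using OreLocalization.ind with
    | _ b s =>
      obtain ⟨_, k, rfl⟩ := s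
      refine ⟨k, b, ?_⟩
      rw [← map_pow, numeratorHom_apply, numeratorHom_apply]
      exact OreLocalization.mul_cancel (s := (⟨D ^ k, k, rfl⟩ : S)) (t := 1) (r := b)
  have hall : ∀ γ : OreLocalization S Q, IsUnit γ := by
    intro γ
    obtain ⟨k, b, h⟩ := hexp γ
    have h1 := hunit b
    obtain ⟨v, hv⟩ := (hunit D).pow k
    rw [← hv] at h
    have h2 : γ = (↑v⁻¹ : OreLocalization S Q) * numeratorHom b := by rw [← h, Units.inv_mul_cancel_left]
    rw [h2]
    exact v⁻¹.isUnit.mul h1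
  refine ⟨OreLocalization S Q, groupOfIsUnit hall, numeratorHom, ?_, hexp⟩
  intro a b h
  rw [numeratorHom_apply, numeratorHom_apply, oreDiv_eq_iff] at h
  obtain ⟨u, v, h1, h2⟩ := h
  simp only [OneMemClass.coe_one, mul_one] at h2
  rw [← h2] at h1
  exact (hSc u _ _ (by simpa [Submonoid.smul_def] using h1)).symm

end fractions

/-! ## abstract Garside groups and periodic elements -/
section abstractG
variable {Γ : Type*} [Group Γ]

structure GG (P : Submonoid Γ) (Δ : Γ) : Prop where
  anti : ∀ a, a ∈ P → a⁻¹ ∈ P → a = 1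
  mem : Δ ∈ P
  central : ∀ a, Commute (Δ ^ 2) a
  conj : ∀ a ∈ P, Δ⁻¹ * a * Δ ∈ P
  inf : ∀ T : Set Γ, T.Nonempty → (∃ c, ∀ t ∈ T, c⁻¹ * t ∈ P) →
    ∃ g, (∀ t ∈ T, g⁻¹ * t ∈ P) ∧ ∀ c, (∀ t ∈ T, c⁻¹ * t ∈ P) → c⁻¹ * g ∈ P

variable {P : Submonoid Γ} {Δ : Γ}

lemma GG.conj' (G : GG P Δ) {a : Γ} (ha : a ∈ P) : Δ * a * Δ⁻¹ ∈ P := by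
  have h := G.conj a ha
  have e : Δ⁻¹ * a * Δ = Δ * a * Δ⁻¹ := by
    have := (G.central a).eq
    rw [pow_two] at this
    calc Δ⁻¹ * a * Δ = Δ⁻¹ * (a * (Δ * Δ)) * Δ⁻¹ := by group
      _ = Δ⁻¹ * (Δ * Δ * a) * Δ⁻¹ := by rw [this]
      _ = _ := by group
  rwa [← e]

theorem GG.periodic (G : GG P Δ) {x : Γ} (hxP : x ∈ P) {N K : ℕ} (hN : 0 < N) (_hK : 0 < K)
    (hx : x ^ N = (Δ ^ 2) ^ K) :
    ∃ b z : Γ, z ^ (N / N.gcd K) = Δ ^ 2 ∧ b⁻¹ * x * b = z ^ (K / N.gcd K) ∧ z ∈ P ∧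
      (∀ j : ℕ, 2 * j ≤ N / N.gcd K → (z ^ j)⁻¹ * Δ ∈ P) ∧
      (∀ j : ℕ, N / N.gcd K ≤ 2 * j → Δ⁻¹ * z ^ j ∈ P) := by
  set D := Δ ^ 2 with hD
  have hDc : ∀ a, Commute D a := G.central
  let c : ℤ → ℤ → Γ := fun j m => x ^ j * D ^ m
  have hcm : ∀ j m j' m', c j m * c j' m' = c (j + j') (m + m') := by
    intro j m j' m'
    have h1 : D ^ m * x ^ j' = x ^ j' * D ^ m := (((hDc x).zpow_zpow m j')).eq
    simp only [c]
    rw [zpow_add, zpow_add]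
    calc x ^ j * D ^ m * (x ^ j' * D ^ m') = x ^ j * (D ^ m * x ^ j') * D ^ m' := by group
      _ = _ := by rw [h1]; group
  have hc0 : c 0 0 = 1 := by simp [c]
  have hcinv : ∀ j m, (c j m)⁻¹ = c (-j) (-m) := by
    intro j m
    rw [inv_eq_iff_mul_eq_one, hcm, add_neg_cancel, add_neg_cancel, hc0]
  have hcD : ∀ j m, c j (m + 1) = c j m * D := by
    intro j m; simp only [c]; rw [zpow_add_one, mul_assoc]
  have hDP : D ∈ P := P.pow_mem G.mem 2
  -- lower bounds
  have hlow : ∀ j m : ℤ, -N ≤ 2 * (j * K + m * N) → D ^ K * c j m ∈ P := by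
    intro j m h
    have e1 : j = N * (j / N) + j % N := (Int.mul_ediv_add_emod j N).symm
    have hr0 : 0 ≤ j % N := Int.emod_nonneg _ (by positivity)
    have hr1 : j % N < N := Int.emod_lt_of_pos _ (by positivity)
    set q := j / N
    set t := j % N
    have e2 : x ^ j = D ^ (K * q : ℤ) * x ^ t := by
      rw [e1, zpow_add, zpow_mul, zpow_natCast, hx, zpow_mul, zpow_natCast]
    have hm : 0 ≤ K + K * q + m := by
      by_contra hcon
      push Not at hcon
      have : (K : ℤ) + K * q + m ≤ -1 := by omega
      have h1 : (K + K * q + m) * (N : ℤ) ≤ -1 * N := by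
        apply mul_le_mul_of_nonneg_right this; positivity
      have h2 : t * K ≤ N * K := mul_le_mul_of_nonneg_right hr1.le (by positivity)
      have : j * K + m * N = (K + K * q + m) * N - N * K + t * K := by rw [e1]; ring
      rw [this] at h
      have : (0 : ℤ) < N := by positivity
      nlinarith
    obtain ⟨k, hk⟩ := Int.eq_ofNat_of_zero_le hm
    obtain ⟨i, hi⟩ := Int.eq_ofNat_of_zero_le hr0
    have : D ^ K * c j m = D ^ k * x ^ i := by
      simp only [c]
      rw [e2, hi, zpow_natCast]
      have h3 : x ^ i * D ^ m = D ^ m * x ^ i := (((hDc x).zpow_left m).pow_right i).eq.symm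
      calc D ^ K * (D ^ (K * q : ℤ) * x ^ i * D ^ m)
          = D ^ (K : ℤ) * D ^ (K * q : ℤ) * (x ^ i * D ^ m) := by rw [zpow_natCast]; group
        _ = D ^ (K + K * q + m : ℤ) * x ^ i := by rw [h3, ← zpow_add, ← mul_assoc, ← zpow_add]
        _ = _ := by rw [hk, ← zpow_natCast D k]
    rw [this]
    exact P.mul_mem (P.pow_mem hDP k) (P.pow_mem hxP i)
  let T : Set Γ := {t | ∃ j m : ℤ, 0 ≤ j * K + m * N ∧ t = c j m} ∪
    {t | ∃ j m : ℤ, -N ≤ 2 * (j * K + m * N) ∧ t = c j m * Δ}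
  have hT : T.Nonempty := ⟨c 0 0, Or.inl ⟨0, 0, by simp, rfl⟩⟩
  obtain ⟨b, hb1, hb2⟩ := G.inf T hT ⟨(D ^ K)⁻¹, by
    rintro t (⟨j, m, h, rfl⟩ | ⟨j, m, h, rfl⟩)
    · rw [inv_inv]; exact hlow j m (by omega)
    · rw [inv_inv, ← mul_assoc]; exact P.mul_mem (hlow j m h) G.mem⟩
  have hrightΔ : ∀ a t : Γ, a⁻¹ * t ∈ P → (a * Δ)⁻¹ * (t * Δ) ∈ P := by
    intro a t h
    have := G.conj _ h
    have e : (a * Δ)⁻¹ * (t * Δ) = Δ⁻¹ * (a⁻¹ * t) * Δ := by group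
    rwa [e]
  have f1 : ∀ j m : ℤ, 0 ≤ j * K + m * N → b⁻¹ * c j m * b ∈ P := by
    intro j m h
    have := hb2 ((c j m)⁻¹ * b) (by
      intro t ht
      have e : ((c j m)⁻¹ * b)⁻¹ * t = b⁻¹ * (c j m * t) := by group
      rw [e]
      apply hb1
      rcases ht with ⟨j', m', h', rfl⟩ | ⟨j', m', h', rfl⟩
      · left; exact ⟨j + j', m + m', by nlinarith, hcm _ _ _ _⟩
      · right; exact ⟨j + j', m + m', by nlinarith, by rw [← mul_assoc, hcm]⟩)
    have e : ((c j m)⁻¹ * b)⁻¹ * b = b⁻¹ * c j m * b := by group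
    rwa [e] at this
  have f2 : ∀ j m : ℤ, N ≤ 2 * (j * K + m * N) → Δ⁻¹ * (b⁻¹ * c j m * b) ∈ P := by
    intro j m h
    have := hb2 ((c j m)⁻¹ * (b * Δ)) (by
      intro t ht
      have e : ((c j m)⁻¹ * (b * Δ))⁻¹ * t = (b * Δ)⁻¹ * (c j m * t) := by group
      rw [e]
      rcases ht with ⟨j', m', h', rfl⟩ | ⟨j', m', h', rfl⟩
      · have e2 : c j m * c j' m' = c (j + j') (m + m' - 1) * Δ * Δ := by
          rw [hcm, mul_assoc, ← pow_two, ← hD, ← hcD, sub_add_cancel]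
        rw [e2]
        apply hrightΔ
        apply hb1
        right
        exact ⟨_, _, by nlinarith, rfl⟩
      · have e3 : c j m * (c j' m' * Δ) = c (j + j') (m + m') * Δ := by rw [← mul_assoc, hcm]
        rw [e3]
        apply hrightΔ
        apply hb1
        left
        exact ⟨_, _, by nlinarith, rfl⟩)
    have e : ((c j m)⁻¹ * (b * Δ))⁻¹ * b = Δ⁻¹ * (b⁻¹ * c j m * b) := by group
    rwa [e] at this
  have f3 : ∀ j m : ℤ, 2 * (j * K + m * N) ≤ N → (b⁻¹ * c j m * b)⁻¹ * Δ ∈ P := by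
    intro j m h
    have h1 := f2 (-j) (-m + 1) (by nlinarith)
    rw [hcD, ← hcinv] at h1
    have h2 := G.conj' h1
    have e : Δ * (Δ⁻¹ * (b⁻¹ * ((c j m)⁻¹ * D) * b)) * Δ⁻¹ = (b⁻¹ * c j m * b)⁻¹ * Δ := by
      have h3 := (hDc b).eq
      calc Δ * (Δ⁻¹ * (b⁻¹ * ((c j m)⁻¹ * D) * b)) * Δ⁻¹
          = b⁻¹ * (c j m)⁻¹ * (D * b) * Δ⁻¹ := by group
        _ = _ := by rw [h3, hD]; group
    rwa [e] at h2
  have f0 : ∀ j m : ℤ, j * K + m * N = 0 → b⁻¹ * c j m * b = 1 := by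
    intro j m h
    apply G.anti
    · exact f1 j m h.ge
    · have := f1 (-j) (-m) (by nlinarith)
      rw [← hcinv] at this
      have e : (b⁻¹ * c j m * b)⁻¹ = b⁻¹ * (c j m)⁻¹ * b := by group
      rwa [e]
  have f0' : ∀ j m : ℤ, j * K + m * N = 0 → c j m = 1 := by
    intro j m h
    have := f0 j m h
    calc c j m = b * (b⁻¹ * c j m * b) * b⁻¹ := by group
      _ = 1 := by rw [this]; group
  -- the root
  set g := N.gcd K with hg
  have hgpos : 0 < g := Nat.gcd_pos_of_pos_left _ hN
  obtain ⟨N₁, hN₁⟩ : g ∣ N := Nat.gcd_dvd_left N K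
  obtain ⟨K₁, hK₁⟩ : g ∣ K := Nat.gcd_dvd_right N K
  have hNg : N / g = N₁ := by rw [hN₁]; exact Nat.mul_div_cancel_left _ hgpos
  have hKg : K / g = K₁ := by rw [hK₁]; exact Nat.mul_div_cancel_left _ hgpos
  have hbez : (g : ℤ) = N.gcdB K * K + N.gcdA K * N := by
    rw [hg, Nat.gcd_eq_gcd_ab]; ring
  set a₁ := N.gcdB K
  set a₂ := N.gcdA K
  have hNz : (N : ℤ) = g * N₁ := by exact_mod_cast hN₁
  have hKz : (K : ℤ) = g * K₁ := by exact_mod_cast hK₁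
  have hcpow : ∀ (j m : ℤ) (k : ℕ), c j m ^ k = c (k * j) (k * m) := by
    intro j m k
    induction k with
    | zero => simp [hc0]
    | succ k ih => rw [pow_succ, ih, hcm]; push_cast; congr 1 <;> ring
  have hzpow : ∀ k : ℕ, (b⁻¹ * c a₁ a₂ * b) ^ k = b⁻¹ * c (k * a₁) (k * a₂) * b := by
    intro k
    have := conj_pow (a := b⁻¹) (b := c a₁ a₂) (i := k)
    rw [inv_inv] at this
    rw [this, hcpow]
  have hwt : ∀ k : ℤ, (k * a₁) * K + (k * a₂) * N = k * g := by
    intro k; rw [hbez]; ring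
  refine ⟨b, b⁻¹ * c a₁ a₂ * b, ?_, ?_, ?_, ?_, ?_⟩
  · rw [hNg, hzpow]
    have h1 : c (N₁ * a₁) (N₁ * a₂ - 1) = 1 := f0' _ _ (by
      have := hwt N₁; rw [sub_mul]; nlinarith)
    have h2 := hcD (N₁ * a₁) (N₁ * a₂ - 1)
    rw [sub_add_cancel, h1, one_mul] at h2
    rw [h2, mul_assoc, (hDc b).eq]; group
  · rw [hKg, hzpow]
    have h1 : c (K₁ * a₁ - 1) (K₁ * a₂) = 1 := f0' _ _ (by
      have := hwt K₁; rw [sub_mul]; nlinarith)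
    have h2 := hcm (1) 0 (K₁ * a₁ - 1) (K₁ * a₂)
    rw [h1, mul_one, zero_add, add_sub_cancel] at h2
    rw [← h2]; simp [c]
  · exact f1 _ _ (by rw [← hbez]; positivity)
  · intro j hj
    rw [hzpow]
    apply f3
    rw [hwt]
    rw [hNg] at hj
    have : (2 * j : ℤ) ≤ N₁ := by exact_mod_cast hj
    have : (0 : ℤ) < g := by positivity
    nlinarith
  · intro j hj
    rw [hzpow]
    apply f2
    rw [hwt]
    rw [hNg] at hj
    have : (N₁ : ℤ) ≤ 2 * j := by exact_mod_cast hj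
    have : (0 : ℤ) < g := by positivity
    nlinarith

end abstractG

/-! ## back to the Artin monoid -/
section back
variable {B : Type u} {M : CoxeterMatrix B} {W : Type*} [Group W] {cs : CoxeterSystem M W} [Finite W]
  {w₀ : W}

def Cyc (x y : ArtinTitsMonoid M) : Prop :=
  Relation.ReflTransGen (fun u v : ArtinTitsMonoid M => ∃ a b, u = a * b ∧ v = b * a) x y

lemma dvd_of_coprime (cs : CoxeterSystem M W) {c y u v : ArtinTitsMonoid M}
    (huv : ∀ e, e ∣ u → e ∣ v → e = 1) (h1 : c ∣ y * u) (h2 : c ∣ y * v) : c ∣ y := by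
  obtain ⟨j, hc, ⟨e, he⟩, h3⟩ := exists_lcm cs c y
  have key : ∀ u, c ∣ y * u → e ∣ u := by
    intro u hu
    obtain ⟨k, hk⟩ := h3 _ hu (Dvd.intro u rfl)
    rw [he, mul_assoc] at hk
    exact ⟨k, left_cancel cs hk⟩
  have := huv e (key u h1) (key v h2)
  rw [this, mul_one] at he
  rwa [← he]

lemma cyc_of_conj (hw₀ : ∀ w : W, cs.length w ≤ cs.length w₀) {N K : ℕ} (_hN : 0 < N) (hK : 0 < K)
    {x : ArtinTitsMonoid M} (n : ℕ) : ∀ (y g : ArtinTitsMonoid M), len g = n →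
    y ^ N = (r cs w₀ ^ 2) ^ K → y * g = g * x → Cyc y x := by
  induction n using Nat.strong_induction_on with
  | _ n ih =>
  intro y g hn hy hyg
  obtain ⟨a, ha, ha2⟩ := exists_gcd cs {y, g} ⟨y, by simp⟩
  obtain ⟨y', hy'⟩ := ha y (by simp)
  obtain ⟨g', hg'⟩ := ha g (by simp)
  by_cases h1 : a = 1
  · have hcop : ∀ m e, e ∣ g → e ∣ y ^ m → e = 1 := by
      intro m
      induction m with
      | zero => intro e _ h; exact dvd_antisymm' (by simpa using h) (one_dvd e)
      | succ m ihm =>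
        intro e he1 he2
        have hey : e ∣ y := dvd_of_coprime cs ihm (he1.trans (by rw [hyg]; exact Dvd.intro _ rfl))
          (by rwa [← pow_succ'])
        have : e ∣ a := ha2 e (by
          rintro z (rfl | rfl) <;> assumption)
        rw [h1] at this
        exact dvd_antisymm' this (one_dvd e)
    obtain ⟨k, c, hkc⟩ := exists_mul_eq_D hw₀ g
    have : g = 1 := by
      apply hcop (N * k) g dvd_rfl
      rw [pow_mul, hy, ← pow_mul, ]
      refine Dvd.dvd.trans ⟨c, hkc.symm⟩ (pow_dvd_pow _ ?_)
      nlinarith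
    rw [this, mul_one, one_mul] at hyg
    rw [hyg]; exact Relation.ReflTransGen.refl
  · refine Relation.ReflTransGen.head (b := y' * a) ⟨a, y', hy', rfl⟩ ?_
    refine ih (len g') ?_ (y' * a) g' rfl ?_ ?_
    · have : len a ≠ 0 := fun h => h1 (eq_one_of_len h)
      have h2 := congrArg len hg'
      rw [len_mul] at h2; omega
    · apply left_cancel cs (a := a)
      have h2 : ∀ m, a * (y' * a) ^ m = y ^ m * a := by
        intro m
        induction m with
        | zero => simp
        | succ m ihm => rw [pow_succ, ← mul_assoc, ihm, pow_succ, hy']; simp only [mul_assoc]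
      rw [h2, hy, ((D_central hw₀ a).pow_right K).eq]
    · apply left_cancel cs (a := a)
      rw [hg', mul_assoc, ← hg'] at hyg
      calc a * (y' * a * g') = (a * y') * (a * g') := by simp only [mul_assoc]
        _ = _ := by rw [← hy', ← hg', hyg]

/-- the Garside group of fractions -/
lemma exists_GG (hw₀ : ∀ w : W, cs.length w ≤ cs.length w₀) :
    ∃ (Γ : Type u) (_ : Group Γ) (ι : ArtinTitsMonoid M →* Γ), Function.Injective ι ∧
      (∀ γ : Γ, ∃ k b, ι (r cs w₀ ^ 2) ^ k * γ = ι b) ∧ GG (MonoidHom.mrange ι) (ι (r cs w₀)) := by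
  obtain ⟨Γ, _, ι, hinj, hfr⟩ := exists_group (r cs w₀ ^ 2) (D_central hw₀)
    (fun b c h => left_cancel cs h) (by
      intro b
      obtain ⟨k, c, h⟩ := exists_mul_eq_D hw₀ b
      refine ⟨k, c, h, left_cancel cs (a := b) ?_⟩
      rw [← mul_assoc, h, ((D_central hw₀ b).pow_right k).eq])
  have hcent : ∀ a : Γ, Commute (ι (r cs w₀) ^ 2) a := by
    intro a
    obtain ⟨k, b, h⟩ := hfr a
    have h1 : Commute (ι (r cs w₀) ^ 2) (ι b) := by
      rw [← map_pow, commute_iff_eq, ← map_mul, ← map_mul, (D_central hw₀ b).eq]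
    rw [← h, map_pow] at h1
    have h2 : Commute (ι (r cs w₀) ^ 2) ((ι (r cs w₀) ^ 2) ^ k)⁻¹ :=
      ((Commute.refl _).pow_right k).inv_right
    have := h2.mul_right h1
    rwa [inv_mul_cancel_left] at this
  refine ⟨Γ, _, ι, hinj, hfr, ?_, ⟨_, rfl⟩, hcent, ?_, ?_⟩
  · rintro a ⟨b, rfl⟩ ⟨c, hc⟩
    have : b * c = 1 := hinj (by rw [map_mul, hc, mul_inv_cancel, map_one])
    have h2 := congrArg len this
    rw [len_mul, len_one] at h2
    rw [eq_one_of_len (b := b) (by omega), map_one]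
  · rintro a ⟨b, rfl⟩
    obtain ⟨b', h⟩ := exists_conj_Δ hw₀ b
    refine ⟨b', ?_⟩
    rw [mul_assoc, ← map_mul, h, map_mul, inv_mul_cancel_left]
  · rintro T ⟨t₀, ht₀⟩ ⟨c, hc⟩
    obtain ⟨g, hg1, hg2⟩ := exists_gcd cs {b | c * ι b ∈ T} (by
      obtain ⟨b, hb⟩ := hc t₀ ht₀
      refine ⟨b, ?_⟩
      simp only [Set.mem_ofPred_eq, hb, mul_inv_cancel_left]; exact ht₀)
    have hlow : ∀ t ∈ T, ∃ d, t = c * ι (g * d) := by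
      intro t ht
      obtain ⟨b, hb⟩ := hc t ht
      have ht' : t = c * ι b := by rw [hb, mul_inv_cancel_left]
      obtain ⟨d, rfl⟩ := hg1 b (by simpa only [Set.mem_ofPred_eq, ← ht'] using ht)
      exact ⟨d, ht'⟩
    refine ⟨c * ι g, ?_, ?_⟩
    · intro t ht
      obtain ⟨d, rfl⟩ := hlow t ht
      exact ⟨d, by rw [map_mul]; group⟩
    · intro e he
      -- clear denominators of `c⁻¹ * e`
      obtain ⟨k, f, hf⟩ := hfr (c⁻¹ * e)
      set D := r cs w₀ ^ 2 with hDdef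
      have hDc : ∀ a, Commute (ι D ^ k) a := by
        intro a; rw [hDdef, map_pow]; exact (hcent a).pow_left k
      -- `f ∣ D^k * b` for all `b` in the set
      have h1 : ∀ b ∈ {b | c * ι b ∈ T}, f ∣ D ^ k * b := by
        intro b hb
        obtain ⟨d, hd⟩ := he _ hb
        refine ⟨d, hinj ?_⟩
        rw [map_mul, map_mul, hd, ← hf, map_pow]; group
      obtain ⟨j, hj1, ⟨q, hq⟩, hj3⟩ := exists_lcm cs f (D ^ k)
      have h2 : q ∣ g := hg2 q (by
        intro b hb
        obtain ⟨p, hp⟩ := hj3 _ (h1 b hb) (Dvd.intro _ rfl)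
        rw [hq, mul_assoc] at hp
        exact ⟨p, left_cancel cs hp⟩)
      have h3 : f ∣ D ^ k * g := hj1.trans (by rw [hq]; exact mul_dvd_mul_left _ h2)
      obtain ⟨p, hp⟩ := h3
      refine ⟨p, ?_⟩
      have h4 := congrArg ι hp
      rw [map_mul, map_mul, map_pow, ← hf, mul_assoc] at h4
      have h5 := mul_left_cancel h4
      rw [mul_assoc] at h5
      rw [h5]; group

end back
end ATM


namespace ATM

/-! ## sign sequences -/
section signs

/-- sign sequences attached to a root -/
structure SSeq (N : ℕ) (A : ℤ → ℝ) : Prop where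
  three : 3 ≤ N
  per : ∀ k, A (k + N) = A k
  ne : ∀ k, A k ≠ 0
  a1 : ∀ (p : ℤ) (i j : ℕ), 2 * (i + j) ≤ N → 0 < A p → A (p + i) < 0 → A (p + i + j) < 0
  a2 : ∀ (p : ℤ) (i j : ℕ), 2 * (i + j) ≤ N → A p < 0 → 0 < A (p + i) → 0 < A (p + i + j)
  b1 : ∀ p : ℤ, 0 < A p → 0 < A (p + (N / 2 : ℕ)) → A (p + (N - N / 2 : ℕ)) < 0
  b2 : ∀ p : ℤ, A p < 0 → A (p + (N / 2 : ℕ)) < 0 → 0 < A (p + (N - N / 2 : ℕ))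

variable {N : ℕ} {A : ℤ → ℝ}

lemma SSeq.neg (h : SSeq N A) : SSeq N (fun k => - A k) where
  three := h.three
  per k := by rw [h.per]
  ne k := neg_ne_zero.mpr (h.ne k)
  a1 p i j hij h1 h2 := by
    rw [neg_lt_zero]; exact h.a2 p i j hij (by linarith) (by linarith)
  a2 p i j hij h1 h2 := by
    rw [neg_pos]; exact h.a1 p i j hij (by linarith) (by linarith)
  b1 p h1 h2 := by rw [neg_lt_zero]; exact h.b2 p (by linarith) (by linarith)
  b2 p h1 h2 := by rw [neg_pos]; exact h.b1 p (by linarith) (by linarith)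

lemma SSeq.shift (h : SSeq N A) (q : ℤ) : SSeq N (fun k => A (q + k)) where
  three := h.three
  per k := by rw [← add_assoc, h.per]
  ne k := h.ne _
  a1 p i j hij h1 h2 := by
    have := h.a1 (q + p) i j hij h1 (by rwa [← add_assoc] at h2)
    rwa [← add_assoc, ← add_assoc]
  a2 p i j hij h1 h2 := by
    have := h.a2 (q + p) i j hij h1 (by rwa [← add_assoc] at h2)
    rwa [← add_assoc, ← add_assoc]
  b1 p h1 h2 := by
    have := h.b1 (q + p) h1 (by rwa [← add_assoc] at h2)
    rwa [← add_assoc]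
  b2 p h1 h2 := by
    have := h.b2 (q + p) h1 (by rwa [← add_assoc] at h2)
    rwa [← add_assoc]

/-- the coefficients -/
noncomputable def cf (N : ℕ) (k : ℤ) : ℂ :=
  Complex.I * Complex.exp (-(Real.pi * (2 * k + 1) / N : ℝ) * Complex.I)

lemma cf_re (N : ℕ) (k : ℤ) : (cf N k).re = Real.sin (Real.pi * (2 * k + 1) / N) := by
  rw [cf, ← Complex.ofReal_neg, Complex.mul_re, Complex.exp_ofReal_mul_I_re,
    Complex.exp_ofReal_mul_I_im, Real.sin_neg]
  simp

/-- the root of unity -/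
noncomputable def zt (N : ℕ) : ℂ := Complex.exp ((2 * Real.pi / N : ℝ) * Complex.I)

lemma zt_ne (N : ℕ) : zt N ≠ 0 := Complex.exp_ne_zero _

lemma zt_re (N : ℕ) : (zt N).re = Real.cos (2 * Real.pi / N) := by
  rw [zt, Complex.exp_ofReal_mul_I_re]

lemma zt_im (N : ℕ) : (zt N).im = Real.sin (2 * Real.pi / N) := by
  rw [zt, Complex.exp_ofReal_mul_I_im]

lemma zt_im_pos (hN : 3 ≤ N) : 0 < (zt N).im := by
  rw [zt_im]
  have h3 : (3 : ℝ) ≤ N := by exact_mod_cast hN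
  apply Real.sin_pos_of_pos_of_lt_pi
  · positivity
  · rw [div_lt_iff₀ (by positivity)]
    nlinarith [Real.pi_pos]

lemma zt_pow (hN : 0 < N) : zt N ^ N = 1 := by
  rw [zt, ← Complex.exp_nat_mul, Complex.exp_eq_one_iff]
  refine ⟨1, ?_⟩
  have : (N : ℂ) ≠ 0 := by exact_mod_cast hN.ne'
  push_cast
  field_simp

lemma cf_shift (N : ℕ) (k : ℤ) : cf N k = zt N * cf N (k + 1) := by
  rw [cf, zt, cf, mul_left_comm, ← Complex.exp_add]
  congr 2
  push_cast
  ring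

lemma cf_per (hN : 0 < N) (k : ℤ) : cf N (k + N) = cf N k := by
  rw [cf, cf, Complex.exp_eq_exp_iff_exists_int.mpr]
  refine ⟨-1, ?_⟩
  have : (N : ℂ) ≠ 0 := by exact_mod_cast hN.ne'
  push_cast
  field_simp
  ring

/-- the transform -/
noncomputable def UU (N : ℕ) (A : ℤ → ℝ) : ℂ := ∑ k ∈ Finset.range N, (A k : ℂ) * cf N k

lemma UU_neg : UU N (fun k => - A k) = - UU N A := by
  simp [UU, Finset.sum_neg_distrib]

lemma UU_shift (hN : 0 < N) (hper : ∀ k, A (k + N) = A k) :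
    UU N (fun k => A (1 + k)) = zt N * UU N A := by
  have h1 : UU N (fun k => A (1 + k)) =
      ∑ k ∈ Finset.range N, zt N * ((A ((k + 1 : ℕ) : ℤ) : ℂ) * cf N ((k + 1 : ℕ) : ℤ)) := by
    rw [UU]
    apply Finset.sum_congr rfl
    intro k _
    rw [cf_shift]
    push_cast
    rw [add_comm (1 : ℤ)]
    ring
  rw [h1, ← Finset.mul_sum, UU]
  congr 1
  have h2 := Finset.sum_range_succ (fun k : ℕ => (A (k : ℤ) : ℂ) * cf N (k : ℤ)) N
  have h3 := Finset.sum_range_succ' (fun k : ℕ => (A (k : ℤ) : ℂ) * cf N (k : ℤ)) N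
  rw [h2] at h3
  have h4 : (A ((N : ℕ) : ℤ) : ℂ) * cf N (N : ℤ) = (A ((0 : ℕ) : ℤ) : ℂ) * cf N ((0 : ℕ) : ℤ) := by
    have e1 := hper 0
    have e2 := cf_per hN 0
    rw [zero_add] at e1 e2
    rw [e1, e2]; rfl
  rw [h4] at h3
  exact (add_right_cancel h3).symm

lemma SSeq.pos (h : SSeq N A) : 0 < N := by have := h.three; omega

lemma SSeq.UU_shift_neg (h : SSeq N A) (n : ℕ) :
    zt N ^ n * UU N (fun k => A (-n + k)) = UU N A := by
  induction n with
  | zero => simp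
  | succ n ih =>
    have h1 := UU_shift (A := fun k => A (-((n + 1 : ℕ) : ℤ) + k)) h.pos (h.shift (-(n + 1 : ℕ))).per
    have h2 : (fun k => A (-((n + 1 : ℕ) : ℤ) + (1 + k))) = fun k => A (-n + k) := by
      funext k; congr 1; push_cast; ring
    simp only [h2] at h1
    rw [pow_succ, mul_assoc, ← h1, ih]

lemma SSeq.claimE (h : SSeq N A) (h0 : 0 < A 0) (h1 : A (-1) < 0) : 0 < (UU N A).re := by
  have hN : (0 : ℝ) < N := by exact_mod_cast h.pos
  have hp : ∀ k : ℕ, 2 * (k + 1) ≤ N → 0 < A k := by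
    intro k hk
    have := h.a2 (-1) 1 k (by omega) h1 (by simpa using h0)
    simpa using this
  have hm : ∀ j : ℕ, 2 * (j + 1) ≤ N → A (-1 - j) < 0 := by
    intro j hj
    by_contra hcon
    have hpos : 0 < A (-1 - j) := lt_of_le_of_ne (not_lt.mp hcon) (h.ne _).symm
    have := h.a1 (-1 - j) j 1 (by omega) hpos (by simpa using h1)
    simp at this
    linarith
  have hs : ∀ k : ℕ, 2 * (k + 1) ≤ N → 0 < Real.sin (Real.pi * (2 * k + 1) / N) := by
    intro k hk
    have hk' : (2 : ℝ) * (k + 1) ≤ N := by exact_mod_cast hk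
    apply Real.sin_pos_of_pos_of_lt_pi
    · positivity
    · rw [div_lt_iff₀ hN]
      apply mul_lt_mul_of_pos_left _ Real.pi_pos
      linarith
  have hre : (UU N A).re = ∑ k ∈ Finset.range N, A k * Real.sin (Real.pi * (2 * k + 1) / N) := by
    rw [UU, Complex.re_sum]
    apply Finset.sum_congr rfl
    intro k _
    rw [Complex.re_ofReal_mul, cf_re]
    push_cast; rfl
  rw [hre]
  apply Finset.sum_pos'
  · intro k hk
    have hkN := Finset.mem_range.mp hk
    by_cases c1 : 2 * (k + 1) ≤ N
    · exact (mul_pos (hp k c1) (hs k c1)).le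
    · by_cases c2 : 2 * k + 1 = N
      · have : Real.pi * (2 * k + 1) / N = Real.pi := by
          have : (2 * k + 1 : ℝ) = N := by exact_mod_cast c2
          rw [this]; field_simp
        rw [this, Real.sin_pi, mul_zero]
      · obtain ⟨j, hj⟩ : ∃ j : ℕ, N = k + 1 + j := ⟨N - (k + 1), by omega⟩
        have hj2 : 2 * (j + 1) ≤ N := by omega
        have e1 : A k = A (-1 - j) := by
          rw [← h.per (-1 - j)]; congr 1; rw [hj]; push_cast; ring
        have e2 : Real.sin (Real.pi * (2 * k + 1) / N) = - Real.sin (Real.pi * (2 * j + 1) / N) := by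
          rw [← Real.sin_two_pi_sub]
          congr 1
          have : (N : ℝ) = k + 1 + j := by exact_mod_cast hj
          field_simp
          rw [this]; ring
        rw [e1, e2]
        have := mul_pos (neg_pos.mpr (hm j hj2)) (hs j hj2)
        linarith
  · refine ⟨0, Finset.mem_range.mpr h.pos, ?_⟩
    have c1 : 2 * (0 + 1) ≤ N := by have := h.three; omega
    exact mul_pos (hp 0 c1) (hs 0 c1)

/-- the positive cone on `ℂ` -/
def Pos (c : ℂ) : Prop := 0 < c.re ∨ (c.re = 0 ∧ c.im < 0)

lemma Pos.add {a b : ℂ} (ha : Pos a) (hb : Pos b) : Pos (a + b) := by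
  rcases ha with ha | ⟨ha, ha'⟩ <;> rcases hb with hb | ⟨hb, hb'⟩
  · left; simp; linarith
  · left; simp; linarith
  · left; simp; linarith
  · right; simp; constructor <;> linarith

lemma Pos.smul {a : ℂ} (ha : Pos a) {t : ℝ} (ht : 0 < t) : Pos (t * a) := by
  rcases ha with ha | ⟨ha, ha'⟩
  · left; simp; positivity
  · right; simp [ha]; exact mul_neg_of_pos_of_neg ht ha'

lemma Pos.of_smul {a : ℂ} {t : ℝ} (ha : Pos (t * a)) (ht : 0 < t) : Pos a := by
  have := ha.smul (inv_pos.mpr ht)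
  rwa [← mul_assoc, ← Complex.ofReal_mul, inv_mul_cancel₀ ht.ne', Complex.ofReal_one, one_mul] at this

lemma Pos.ne {a : ℂ} (ha : Pos a) : a ≠ 0 := by
  rintro rfl
  rcases ha with ha | ⟨_, ha⟩ <;> simp at ha

lemma Pos.not_neg {a : ℂ} (ha : Pos a) : ¬ Pos (-a) := by
  intro h
  have := (ha.add h).ne
  simp at this

lemma Pos.dich {a : ℂ} (ha : a ≠ 0) : Pos a ∨ Pos (-a) := by
  rcases lt_trichotomy a.re 0 with h | h | h
  · right; left; simpa
  · rcases lt_trichotomy a.im 0 with h' | h' | h'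
    · left; right; exact ⟨h, h'⟩
    · exact absurd (Complex.ext h h') ha
    · right; right; simp [h, h']
  · left; left; exact h

lemma not_Pos_iff {a : ℂ} (ha : a ≠ 0) : ¬ Pos a ↔ Pos (-a) :=
  ⟨fun h => (Pos.dich ha).resolve_left h, fun h h' => h'.not_neg h⟩

lemma SSeq.R2 (h : SSeq N A) (h0 : 0 < A 0) (h1 : A 1 < 0) : (zt N * UU N A).re < 0 := by
  have := (h.shift 1).neg.claimE (by simpa using h1) (by simpa using h0)
  rw [UU_neg, UU_shift h.pos h.per, Complex.neg_re] at this
  linarith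

lemma SSeq.run (h : SSeq N A) (h0 : 0 < A 0) : ∃ n : ℕ, n + 1 ≤ N - N / 2 ∧ A (-n - 1) < 0 ∧
    (∀ j : ℕ, j ≤ n → 0 < A (-j)) ∧ 0 < (UU N (fun k => A (-n + k))).re := by
  have h3 := h.three
  have hex : ∃ n : ℕ, n + 1 ≤ N - N / 2 ∧ A (-n - 1) < 0 := by
    by_contra hcon
    push Not at hcon
    have key : ∀ m : ℕ, 1 ≤ m → m ≤ N - N / 2 → 0 < A (N - m) := by
      intro m h1 h2
      have := hcon (m - 1) (by omega)
      have e : A (N - m) = A (-(m - 1 : ℕ) - 1) := by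
        rw [← h.per (-(m - 1 : ℕ) - 1)]; congr 1; omega
      rw [e]
      exact lt_of_le_of_ne this (h.ne _).symm
    have k1 := key (N - N / 2) (by omega) le_rfl
    have k2 := key (N / 2) (by omega) (by omega)
    have := h.b1 0 h0 (by
      convert k1 using 2; omega)
    have e : A (0 + (N - N / 2 : ℕ)) = A (N - (N / 2 : ℕ)) := by congr 1; omega
    rw [e] at this
    linarith
  classical
  have hspec := Nat.find_spec hex
  have hmin := fun m (hm : m < Nat.find hex) => Nat.find_min hex hm
  set n := Nat.find hex
  have hall : ∀ j : ℕ, j ≤ n → 0 < A (-j) := by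
    intro j hj
    rcases Nat.eq_zero_or_pos j with rfl | hj0
    · simpa using h0
    · have := hmin (j - 1) (by omega)
      simp only [not_and, not_lt] at this
      have h5 := this (by omega)
      have e : (-((j - 1 : ℕ) : ℤ) - 1) = -j := by omega
      rw [e] at h5
      exact lt_of_le_of_ne h5 (h.ne _).symm
  refine ⟨n, hspec.1, hspec.2, hall, ?_⟩
  apply (h.shift (-n)).claimE
  · simpa using hall n le_rfl
  · exact hspec.2

lemma SSeq.UU_ne (h : SSeq N A) : UU N A ≠ 0 := by
  have key : ∀ A, SSeq N A → 0 < A 0 → UU N A ≠ 0 := by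
    intro A h h0 hz
    obtain ⟨n, _, _, _, hn⟩ := h.run h0
    have := h.UU_shift_neg n
    rw [hz] at this
    have h2 := (mul_eq_zero.mp this).resolve_left (pow_ne_zero _ (zt_ne N))
    rw [h2] at hn
    simp at hn
  rcases lt_or_gt_of_ne (h.ne 0) with h0 | h0
  · have := key _ h.neg (by simpa using h0)
    rw [UU_neg] at this
    exact fun h => this (by rw [h, neg_zero])
  · exact key A h h0

lemma zt_ident (N n : ℕ) (hN : 0 < N) :
    ((Real.sin ((n + 1) * (2 * Real.pi / N)) : ℝ) : ℂ) * zt N ^ n =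
      (Real.sin (2 * Real.pi / N) : ℝ) + (Real.sin (n * (2 * Real.pi / N)) : ℝ) * (zt N * zt N ^ n) := by
  have h1 : ∀ m : ℕ, zt N ^ m = Complex.cos ((m * (2 * Real.pi / N) : ℝ)) +
      Complex.sin ((m * (2 * Real.pi / N) : ℝ)) * Complex.I := by
    intro m
    rw [zt, ← Complex.exp_nat_mul, ← mul_assoc, Complex.exp_mul_I]
    push_cast; rfl
  have h2 : zt N = Complex.cos ((2 * Real.pi / N : ℝ)) +
      Complex.sin ((2 * Real.pi / N : ℝ)) * Complex.I := by
    have := h1 1; rw [pow_one, Nat.cast_one, one_mul] at this; exact this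
  rw [h1 n, h2]
  generalize hx : n * (2 * Real.pi / N) = x
  have hx' : (n + 1) * (2 * Real.pi / N) = x + 2 * Real.pi / N := by rw [← hx]; ring
  rw [hx']
  generalize 2 * Real.pi / N = y
  rw [Real.sin_add, ← Complex.ofReal_cos, ← Complex.ofReal_sin, ← Complex.ofReal_cos,
    ← Complex.ofReal_sin]
  have hx1 := Real.sin_sq_add_cos_sq x
  have hy1 := Real.sin_sq_add_cos_sq y
  apply Complex.ext <;> simp only [Complex.add_re, Complex.mul_re, Complex.add_im, Complex.mul_im,
    Complex.ofReal_re, Complex.ofReal_im, Complex.I_re, Complex.I_im]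
  · linear_combination (Real.sin y) * hx1
  · ring

lemma SSeq.R1 (h : SSeq N A) (h0 : 0 < A 0) (hp : Pos (zt N * UU N A)) : Pos (UU N A) := by
  have h3 := h.three
  obtain ⟨n, hn1, hn2, hn3, hn4⟩ := h.run h0
  rcases Nat.eq_zero_or_pos n with rfl | hn0
  · left
    simpa using hn4
  by_cases hlt : 2 * (n + 1) < N
  · have hU := h.UU_shift_neg n
    set X := UU N (fun k => A (-n + k))
    have hX : Pos X := Or.inl hn4
    have hNR : (0 : ℝ) < N := by exact_mod_cast h.pos
    have hltR : (2 * (n + 1) : ℝ) < N := by exact_mod_cast hlt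
    have hn0R : (0 : ℝ) < n := by exact_mod_cast hn0
    have hs : ∀ t : ℝ, 0 < t → 2 * t < N → 0 < Real.sin (t * (2 * Real.pi / N)) := by
      intro t ht1 ht2
      apply Real.sin_pos_of_pos_of_lt_pi
      · positivity
      · rw [← mul_div_assoc, div_lt_iff₀ hNR]
        nlinarith [Real.pi_pos]
    have hid := zt_ident N n h.pos
    have e : ((Real.sin ((n + 1) * (2 * Real.pi / N)) : ℝ) : ℂ) * UU N A =
        (Real.sin (2 * Real.pi / N) : ℝ) * X +
          (Real.sin (n * (2 * Real.pi / N)) : ℝ) * (zt N * UU N A) := by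
      rw [← hU, ← mul_assoc, hid]; ring
    apply Pos.of_smul (t := Real.sin ((n + 1) * (2 * Real.pi / N))) _
      (hs _ (by positivity) (by linarith))
    rw [e]
    have h1 := hs 1 one_pos (by linarith)
    rw [one_mul] at h1
    exact (hX.smul h1).add (hp.smul (hs n hn0R (by linarith)))
  · exfalso
    have hA1 : A 1 < 0 := by
      by_contra hcon
      have h1 : 0 < A 1 := lt_of_le_of_ne (not_lt.mp hcon) (h.ne _).symm
      have h2 := h.b1 1 h1 (by
        have := hn3 n le_rfl
        rw [← h.per] at this
        convert this using 2; omega)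
      have h4 := hn3 (N / 2 - 1) (by omega)
      rw [← h.per] at h4
      have e : A (1 + (N - N / 2 : ℕ)) = A (-((N / 2 - 1 : ℕ) : ℤ) + N) := by congr 1; omega
      rw [e] at h2
      linarith
    have := h.R2 h0 hA1
    rcases hp with hp | ⟨hp, _⟩ <;> linarith

end signs
end ATM


namespace ATM

/-! ## chambers -/
section chambers
variable {B : Type*} {M : CoxeterMatrix B} {W : Type*} [Group W] {cs : CoxeterSystem M W}

lemma simple_inj (cs : CoxeterSystem M W) : Function.Injective cs.simple := by
  intro s t h
  by_contra hst
  have h1 : sig M s (al s) = sig M t (al s) := by rw [← rep_simple cs, ← rep_simple cs, h]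
  rw [sig_al_self, sig_apply] at h1
  have h2 := DFunLike.congr_fun h1 s
  simp [al, Ne.symm hst] at h2
  norm_num at h2

lemma finite_B (cs : CoxeterSystem M W) [Finite W] : Finite B :=
  Finite.of_injective _ (simple_inj cs)

/-- functionals not vanishing on roots -/
def Reg (cs : CoxeterSystem M W) (v : (B →₀ ℝ) →ₗ[ℝ] ℂ) : Prop := ∀ β, IsRoot cs β → v β ≠ 0

def Chamber (cs : CoxeterSystem M W) (v : (B →₀ ℝ) →ₗ[ℝ] ℂ) (g : W) : Prop :=
  ∀ s, Pos (v (rep cs g (al s)))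

lemma pos_sum {ι : Type*} (T : Finset ι) (f : ι → ℂ) (h : ∀ i ∈ T, Pos (f i)) (hT : T.Nonempty) :
    Pos (∑ i ∈ T, f i) := by
  classical
  induction hT using Finset.Nonempty.cons_induction with
  | singleton a => simpa using h
  | cons a s ha hs ih =>
    rw [Finset.sum_cons]
    exact (h a (by simp)).add (ih fun i hi => h i (by simp [hi]))

lemma Chamber.pos {v : (B →₀ ℝ) →ₗ[ℝ] ℂ} {g : W} (h : Chamber cs v g) {β : B →₀ ℝ}
    (hβ : IsRoot cs β) (h0 : 0 < rho β) : Pos (v (rep cs g β)) := by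
  have hn := hβ.NN_iff.mpr h0
  have := map_eq_sum (v ∘ₗ rep cs g) β
  rw [LinearMap.comp_apply] at this
  rw [this, Finsupp.sum]
  apply pos_sum
  · intro i hi
    have hi' : β i ≠ 0 := by simpa using hi
    have := (h i).smul (lt_of_le_of_ne (hn i) hi'.symm)
    simpa [Complex.real_smul] using this
  · rw [Finsupp.support_nonempty_iff]; exact hβ.ne_zero

lemma Chamber.pos_iff {v : (B →₀ ℝ) →ₗ[ℝ] ℂ} {g : W} (h : Chamber cs v g) {β : B →₀ ℝ}
    (hβ : IsRoot cs β) : 0 < rho (rep cs g⁻¹ β) ↔ Pos (v β) := by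
  have hr := hβ.rep g⁻¹
  constructor
  · intro h0
    have := h.pos hr h0
    rwa [rep_self_inv] at this
  · intro h0
    rcases lt_or_gt_of_ne hr.rho_ne with h1 | h1
    · have := h.pos hr.neg (by rw [map_neg]; linarith)
      rw [map_neg, map_neg, rep_self_inv] at this
      exact absurd this h0.not_neg
    · exact h1

lemma Chamber.neg_iff {v : (B →₀ ℝ) →ₗ[ℝ] ℂ} {g : W} (h : Chamber cs v g) {β : B →₀ ℝ}
    (hβ : IsRoot cs β) : rho (rep cs g⁻¹ β) < 0 ↔ ¬ Pos (v β) := by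
  rw [← h.pos_iff hβ, not_lt]
  exact ⟨le_of_lt, fun h1 => lt_of_le_of_ne h1 (hβ.rep g⁻¹).rho_ne⟩

lemma lex_lt {a b : ℂ} (h : Pos (b - a)) : toLex (a.re, -a.im) < toLex (b.re, -b.im) := by
  rw [Prod.Lex.toLex_lt_toLex]
  rcases h with h | ⟨h, h'⟩
  · left; simpa using h
  · right; simp at h h'; exact ⟨by simp; linarith, by simpa using h'⟩

lemma exists_half_sum (cs : CoxeterSystem M W) [Finite W] : ∃ x : B →₀ ℝ, ∀ s, ∃ c : ℝ, 0 < c ∧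
    rep cs (cs.simple s) x = x - c • al s := by
  classical
  have := finite_B cs
  have := Fintype.ofFinite W
  have := Fintype.ofFinite B
  let f : W × B → (B →₀ ℝ) := fun q => rep cs q.1 (al q.2)
  have hf : ∀ q, IsRoot cs (f q) := fun q => ⟨q.1, q.2, rfl⟩
  refine ⟨∑ q, if 0 < rho (f q) then f q else 0, fun s => ?_⟩
  have h1 : rep cs (cs.simple s) (∑ q, if 0 < rho (f q) then f q else 0) =
      ∑ q, if 0 < rho (rep cs (cs.simple s) (f q)) then f q else 0 := by
    rw [map_sum]
    apply Fintype.sum_equiv (Equiv.prodCongr (Equiv.mulLeft (cs.simple s)) (Equiv.refl B))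
    intro q
    have e : f ((Equiv.prodCongr (Equiv.mulLeft (cs.simple s)) (Equiv.refl B)) q) =
        rep cs (cs.simple s) (f q) := by
      simp only [f, Equiv.prodCongr_apply, Prod.map, Equiv.coe_mulLeft, Equiv.refl_apply]
      rw [rep_mul_apply]
    rw [e]
    have e2 : rep cs (cs.simple s) (rep cs (cs.simple s) (f q)) = f q := by
      rw [← rep_mul_apply]; simp
    rw [e2]
    split_ifs <;> simp
  have h2 : ∀ q, ∃ c : ℝ, 0 ≤ c ∧ ((if 0 < rho (f q) then f q else 0) -
      (if 0 < rho (rep cs (cs.simple s) (f q)) then f q else 0)) = c • al s ∧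
      (q = (1, s) → 0 < c) := by
    intro q
    have hr := ((hf q).rep (cs.simple s)).rho_ne
    have hr' := (hf q).rho_ne
    by_cases c1 : 0 < rho (f q) <;> by_cases c2 : 0 < rho (rep cs (cs.simple s) (f q))
    · refine ⟨0, le_rfl, by simp [c1, c2], ?_⟩
      rintro rfl
      exfalso
      simp only [f, map_one, Module.End.one_apply, rep_simple, sig_al_self, map_neg, rho_al] at c2
      linarith
    · obtain ⟨c, hc, e⟩ := root_flip (hf q) s c1 (lt_of_le_of_ne (not_lt.mp c2) hr)
      exact ⟨c, hc.le, by simp only [c1, c2, if_true, if_false, sub_zero]; exact e, fun _ => hc⟩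
    · obtain ⟨c, hc, e⟩ := root_flip (hf q).neg s (by
        rw [map_neg]; linarith [lt_of_le_of_ne (not_lt.mp c1) hr']) (by
        rw [map_neg, map_neg]; linarith)
      exact ⟨c, hc.le, by simp only [c1, c2, if_true, if_false, zero_sub]; exact e, fun _ => hc⟩
    · refine ⟨0, le_rfl, by simp [c1, c2], ?_⟩
      rintro rfl
      exfalso
      apply c1
      simp only [f, map_one, Module.End.one_apply, rho_al]
      exact one_pos
  choose c hc1 hc2 hc3 using h2
  refine ⟨∑ q, c q, Finset.sum_pos' (fun q _ => hc1 q) ⟨(1, s), Finset.mem_univ _, hc3 _ rfl⟩, ?_⟩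
  rw [h1, Finset.sum_smul, ← Finset.sum_congr rfl (fun q _ => hc2 q), Finset.sum_sub_distrib]
  abel

lemma exists_chamber [Finite W] {v : (B →₀ ℝ) →ₗ[ℝ] ℂ} (hv : Reg cs v) : ∃ g, Chamber cs v g := by
  obtain ⟨x, hx⟩ := exists_half_sum cs
  obtain ⟨g, hg⟩ := Finite.exists_max
    (fun g : W => toLex ((v (rep cs g x)).re, -(v (rep cs g x)).im))
  refine ⟨g, fun s => ?_⟩
  by_contra hcon
  rw [not_Pos_iff (hv _ ⟨g, s, rfl⟩)] at hcon
  obtain ⟨c, hc, e⟩ := hx s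
  have h1 := hg (g * cs.simple s)
  refine absurd h1 (not_le.mpr (lex_lt ?_))
  rw [rep_mul_apply, e, map_sub, map_sub, map_smul, map_smul, Complex.real_smul]
  have := hcon.smul hc
  convert this using 1
  ring

lemma Rlemma {w g g' : W}
    (h1 : ∀ α, IsRoot cs α → 0 < rho (rep cs g⁻¹ α) → rho (rep cs g'⁻¹ α) < 0 →
      rho (rep cs g'⁻¹ (rep cs w⁻¹ α)) < 0)
    (h2 : ∀ α, IsRoot cs α → 0 < rho (rep cs g⁻¹ α) → rho (rep cs g⁻¹ (rep cs w⁻¹ α)) < 0 →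
      rho (rep cs g'⁻¹ (rep cs w⁻¹ α)) < 0) :
    r cs (g⁻¹ * w * g) * r cs (g⁻¹ * g') = r cs (g⁻¹ * g') * r cs (g'⁻¹ * w * g') := by
  rw [r_mul, r_mul]
  · congr 1; group
  · apply LAdd_of_crit
    intro β hβ h0 h3
    have := h1 (rep cs g β) (hβ.rep g) (by rwa [rep_inv_self]) (by
      rw [← rep_mul_apply]
      convert h3 using 3; group)
    rw [← rep_mul_apply, ← rep_mul_apply] at this
    convert this using 3; group
  · apply LAdd_of_crit
    intro β hβ h0 h3
    have := h2 (rep cs g β) (hβ.rep g) (by rwa [rep_inv_self]) (by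
      rw [← rep_mul_apply, ← rep_mul_apply]
      convert h3 using 3; group)
    rw [← rep_mul_apply, ← rep_mul_apply] at this
    convert this using 3; group

/-- what we use of the periodic simple elements -/
structure Good (cs : CoxeterSystem M W) (w : W) (N : ℕ) : Prop where
  three : 3 ≤ N
  pow : w ^ N = 1
  ladd : ∀ i j, 2 * (i + j) ≤ N → LAdd cs (w ^ i) (w ^ j)
  b : ∀ β, IsRoot cs β → 0 < rho β → 0 < rho (rep cs (w ^ (N / 2))⁻¹ β) →
    rho (rep cs (w ^ (N - N / 2))⁻¹ β) < 0

lemma Good.sseq {w : W} {N : ℕ} (h : Good cs w N) {α : B →₀ ℝ} (hα : IsRoot cs α) :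
    SSeq N (fun k : ℤ => rho (rep cs (w ^ (-k)) α)) := by
  have key : ∀ (p : ℤ) (i : ℕ), rep cs (w ^ (-(p + i))) α = rep cs (w ^ i)⁻¹ (rep cs (w ^ (-p)) α) := by
    intro p i
    rw [← rep_mul_apply]
    congr 2
    rw [neg_add_rev, zpow_add, zpow_neg, zpow_natCast]
  have hr := fun p : ℤ => hα.rep (w ^ (-p))
  have a1 : ∀ (p : ℤ) (α : B →₀ ℝ), IsRoot cs α → ∀ (i j : ℕ), 2 * (i + j) ≤ N →
      0 < rho α → rho (rep cs (w ^ i)⁻¹ α) < 0 → rho (rep cs (w ^ (i + j))⁻¹ α) < 0 := by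
    intro p α hα i j hij h0 h1
    rw [pow_add]
    exact (h.ladd i j hij).crit hα h0 h1
  refine ⟨h.three, ?_, fun k => (hr k).rho_ne, ?_, ?_, ?_, ?_⟩
  · intro k
    simp only [key, h.pow]; simp
  · intro p i j hij h0 h1
    simp only [add_assoc, ← Nat.cast_add, key] at *
    exact a1 p _ (hr p) i j hij h0 h1
  · intro p i j hij h0 h1
    simp only [add_assoc, ← Nat.cast_add, key] at *
    have := a1 p _ (hr p).neg i j hij (by rw [map_neg]; linarith) (by
      rw [map_neg, map_neg]; linarith)
    rw [map_neg, map_neg] at this; linarith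
  · intro p h0 h1
    simp only [key] at *
    exact h.b _ (hr p) h0 h1
  · intro p h0 h1
    simp only [key] at *
    have := h.b _ (hr p).neg (by rw [map_neg]; linarith) (by
      rw [map_neg, map_neg]; linarith)
    rw [map_neg, map_neg] at this; linarith

/-- equivariant regular functionals -/
structure Eqv (cs : CoxeterSystem M W) (w : W) (N : ℕ) (v : (B →₀ ℝ) →ₗ[ℝ] ℂ) : Prop where
  reg : Reg cs v
  eqv : ∀ β, v (rep cs w⁻¹ β) = zt N * v β

lemma Good.exists_eqv [Finite W] {w : W} {N : ℕ} (h : Good cs w N) :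
    ∃ v g, Eqv cs w N v ∧ Chamber cs v g ∧
      r cs w * r cs g = r cs g * r cs (g⁻¹ * w * g) := by
  let v : (B →₀ ℝ) →ₗ[ℝ] ℂ :=
    ∑ k ∈ Finset.range N, (rho ∘ₗ rep cs (w ^ (-(k : ℤ)))).smulRight (cf N k)
  have hv : ∀ α, v α = UU N (fun k : ℤ => rho (rep cs (w ^ (-k)) α)) := by
    intro α
    simp only [v, LinearMap.sum_apply, LinearMap.smulRight_apply, LinearMap.comp_apply,
      Complex.real_smul, UU]
  have hpos : 0 < N := by have := h.three; omega
  have heq : ∀ β, v (rep cs w⁻¹ β) = zt N * v β := by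
    intro β
    rw [hv, hv, ← UU_shift hpos]
    · congr 1
      funext k
      rw [← rep_mul_apply, neg_add_rev, zpow_add, zpow_neg_one]
    · intro k
      rw [neg_add_rev, zpow_add, zpow_neg, zpow_natCast, h.pow, inv_one, one_mul]
  have hreg : Reg cs v := by
    intro β hβ; rw [hv]; exact (h.sseq hβ).UU_ne
  obtain ⟨g, hg⟩ := exists_chamber hreg
  refine ⟨v, g, ⟨hreg, heq⟩, hg, ?_⟩
  have := Rlemma (cs := cs) (w := w) (g := 1) (g' := g) ?_ ?_
  · simpa using this
  · intro α hα h0 h1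
    rw [hg.neg_iff hα] at h1
    rw [hg.neg_iff (hα.rep _), heq]
    intro h2
    rw [hv] at h1 h2
    exact h1 ((h.sseq hα).R1 (by simpa using h0) h2)
  · intro α hα h0 h1
    rw [hg.neg_iff (hα.rep _), heq]
    intro h2
    rw [hv] at h2
    have := (h.sseq hα).R2 (by simpa using h0) (by simpa using h1)
    rcases h2 with h2 | h2 <;> linarith

lemma sector {w : W} {N : ℕ} (hN : 3 ≤ N) {v v' : (B →₀ ℝ) →ₗ[ℝ] ℂ} (hv : Eqv cs w N v)
    (hv' : Eqv cs w N v') (hs : ∀ α, IsRoot cs α → ∃ τ : ℂ, v' α = τ * v α ∧ 0 ≤ τ.im ∧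
      0 ≤ (zt N * τ).im) {g g' : W} (hg : Chamber cs v g) (hg' : Chamber cs v' g') :
    r cs (g⁻¹ * w * g) * r cs (g⁻¹ * g') = r cs (g⁻¹ * g') * r cs (g'⁻¹ * w * g') := by
  have hz := zt_im_pos hN
  apply Rlemma
  · intro α hα h0 h1
    rw [hg.pos_iff hα] at h0
    rw [hg'.neg_iff hα] at h1
    rw [hg'.neg_iff (hα.rep _), hv'.eqv]
    intro h2
    apply h1
    obtain ⟨τ, e, t1, t2⟩ := hs α hα
    have hτ : τ ≠ 0 := by rintro rfl; exact hv'.reg α hα (by rw [e, zero_mul])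
    rw [e] at h2 ⊢
    have hid : (((zt N * τ).im : ℝ) : ℂ) * (τ * v α) =
        (τ.im : ℝ) * (zt N * (τ * v α)) + ((zt N).im * Complex.normSq τ : ℝ) * v α := by
      have : (((zt N * τ).im : ℝ) : ℂ) * τ =
        (τ.im : ℝ) * (zt N * τ) + ((zt N).im * Complex.normSq τ : ℝ) := by
        apply Complex.ext <;> simp [Complex.normSq_apply] <;> ring
      rw [← mul_assoc, this]; ring
    have hpos : Pos ((((zt N * τ).im : ℝ) : ℂ) * (τ * v α)) := by
      rw [hid]
      have p2 := h0.smul (mul_pos hz (Complex.normSq_pos.mpr hτ))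
      rcases t1.eq_or_lt with t1 | t1
      · rw [← t1]; simpa using p2
      · exact (h2.smul t1).add p2
    rcases t2.eq_or_lt with t2 | t2
    · rw [← t2] at hpos; exact absurd (by simp) hpos.ne
    · exact hpos.of_smul t2
  · intro α hα h0 h1
    rw [hg.pos_iff hα] at h0
    rw [hg.neg_iff (hα.rep _), hv.eqv] at h1
    rw [hg'.neg_iff (hα.rep _), hv'.eqv]
    intro h2
    apply h1
    obtain ⟨τ, e, t1, t2⟩ := hs α hα
    rw [e] at h2
    have hid : (((zt N * τ).im : ℝ) : ℂ) * (zt N * v α) =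
        ((zt N).im : ℝ) * (zt N * (τ * v α)) + (τ.im * Complex.normSq (zt N) : ℝ) * v α := by
      have : (((zt N * τ).im : ℝ) : ℂ) * zt N =
        ((zt N).im : ℝ) * (zt N * τ) + (τ.im * Complex.normSq (zt N) : ℝ) := by
        apply Complex.ext <;> simp [Complex.normSq_apply] <;> ring
      rw [← mul_assoc, this]; ring
    have hpos : Pos ((((zt N * τ).im : ℝ) : ℂ) * (zt N * v α)) := by
      rw [hid]
      have p1 := h2.smul hz
      rcases t1.eq_or_lt with t1 | t1
      · rw [← t1]; simpa using p1
      · exact p1.add (h0.smul (mul_pos t1 (Complex.normSq_pos.mpr (zt_ne N))))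
    rcases t2.eq_or_lt with t2 | t2
    · rw [← t2] at hpos; exact absurd (by simp) hpos.ne
    · exact hpos.of_smul t2

lemma isConj_of_mul {Γ : Type*} [Group Γ] {a b c : Γ} (h : a * c = c * b) : IsConj a b := by
  rw [isConj_iff]
  exact ⟨c⁻¹, by rw [inv_inv, mul_assoc, h, inv_mul_cancel_left]⟩

end chambers
end ATM


namespace ATM

/-! ## connectivity -/
section conn
variable {B : Type*} {M : CoxeterMatrix B} {W : Type*} [Group W] {cs : CoxeterSystem M W}

lemma Eqv.smul {w : W} {N : ℕ} {v : (B →₀ ℝ) →ₗ[ℝ] ℂ} (hv : Eqv cs w N v) {c : ℂ} (hc : c ≠ 0) :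
    Eqv cs w N (c • v) where
  reg β hβ := by
    rw [LinearMap.smul_apply, smul_eq_mul]; exact mul_ne_zero hc (hv.reg β hβ)
  eqv β := by
    rw [LinearMap.smul_apply, LinearMap.smul_apply, hv.eqv, smul_eq_mul, smul_eq_mul]; ring

lemma cf0_im (N : ℕ) (hN : 3 ≤ N) : 0 < (cf N 0).im ∧ 0 < (zt N * cf N 0).im := by
  have h3 : (3 : ℝ) ≤ N := by exact_mod_cast hN
  have key : 0 < Real.cos (Real.pi / N) := by
    apply Real.cos_pos_of_mem_Ioo
    have : 0 < Real.pi / N := by positivity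
    refine ⟨by linarith [Real.pi_pos], ?_⟩
    rw [div_lt_div_iff_of_pos_left Real.pi_pos (by positivity) two_pos]
    linarith
  constructor
  · rw [cf, ← Complex.ofReal_neg, Complex.mul_im, Complex.exp_ofReal_mul_I_re,
      Complex.exp_ofReal_mul_I_im, Real.cos_neg]
    simpa using key
  · have := cf_shift N (-1)
    rw [show (-1 : ℤ) + 1 = 0 from rfl] at this
    rw [← this, cf, ← Complex.ofReal_neg, Complex.mul_im, Complex.exp_ofReal_mul_I_re,
      Complex.exp_ofReal_mul_I_im, Real.cos_neg]
    have e : Real.pi * (2 * ((-1 : ℤ) : ℝ) + 1) / N = - (Real.pi / N) := by push_cast; ring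
    rw [e, Real.cos_neg]
    simpa using key

theorem conn [Finite W] {Γ : Type*} [Group Γ] (ι : ArtinTitsMonoid M →* Γ) {w : W} {N : ℕ}
    (hN : 3 ≤ N) {v₀ v₁ : (B →₀ ℝ) →ₗ[ℝ] ℂ} (h₀ : Eqv cs w N v₀) (h₁ : Eqv cs w N v₁) {g₀ g₁ : W}
    (hg₀ : Chamber cs v₀ g₀) (hg₁ : Chamber cs v₁ g₁) :
    IsConj (ι (r cs (g₀⁻¹ * w * g₀))) (ι (r cs (g₁⁻¹ * w * g₁))) := by
  have hBf := finite_B cs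
  let v : ℂ → (B →₀ ℝ) →ₗ[ℝ] ℂ := fun t => (1 - t) • v₀ + t • v₁
  have hva : ∀ t α, v t α = (1 - t) * v₀ α + t * v₁ α := by
    intro t α; simp [v]
  let f : W × B → (B →₀ ℝ) := fun q => rep cs q.1 (al q.2)
  have hf : ∀ q, IsRoot cs (f q) := fun q => ⟨q.1, q.2, rfl⟩
  let X : Set ℂ := ⋃ q : W × B, {t | v t (f q) = 0}
  have hX : X.Countable := by
    apply Set.countable_iUnion
    intro q
    apply Set.Subsingleton.countable
    intro t ht t' ht'
    rw [Set.mem_ofPred_eq, hva] at ht ht'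
    have hq := h₀.reg _ (hf q)
    by_contra hne
    have e1 : (t - t') * (v₁ (f q) - v₀ (f q)) = 0 := by linear_combination ht - ht'
    have e2 := (mul_eq_zero.mp e1).resolve_left (sub_ne_zero.mpr hne)
    apply hq
    linear_combination ht - t * e2
  have hconn : IsPreconnected Xᶜ :=
    (hX.isPathConnected_compl_of_one_lt_rank (by
      rw [Complex.rank_real_complex]; exact Cardinal.one_lt_two)).isConnected.isPreconnected
  have hEq : ∀ t ∈ Xᶜ, Eqv cs w N (v t) := by
    intro t ht
    refine ⟨?_, ?_⟩
    · rintro β ⟨x, s, rfl⟩ h0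
      exact ht (Set.mem_iUnion.mpr ⟨(x, s), h0⟩)
    · intro β
      rw [hva, hva, h₀.eqv, h₁.eqv]; ring
  let P : ℂ → ℂ → Prop := fun t t' => ∀ g g', Chamber cs (v t) g → Chamber cs (v t') g' →
    IsConj (ι (r cs (g⁻¹ * w * g))) (ι (r cs (g'⁻¹ * w * g')))
  have hsec : ∀ {u u' : (B →₀ ℝ) →ₗ[ℝ] ℂ}, Eqv cs w N u → Eqv cs w N u' →
      (∀ α, IsRoot cs α → ∃ τ : ℂ, u' α = τ * u α ∧ 0 ≤ τ.im ∧ 0 ≤ (zt N * τ).im) →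
      ∀ {g g' : W}, Chamber cs u g → Chamber cs u' g' →
      IsConj (ι (r cs (g⁻¹ * w * g))) (ι (r cs (g'⁻¹ * w * g'))) := by
    intro u u' hu hu' hs g g' hg hg'
    have := sector hN hu hu' hs hg hg'
    apply isConj_of_mul (c := ι (r cs (g⁻¹ * g')))
    rw [← map_mul, ← map_mul, this]
  obtain ⟨hω1, hω2⟩ := cf0_im N hN
  set ω := cf N 0
  have hω : ω ≠ 0 := by intro h; rw [h] at hω1; simp at hω1
  have hP : P 0 1 := by
    apply hconn.induction₂ P
    · intro t ht
      have hEt := hEq t ht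
      have hnear : ∀ q : W × B, ∀ᶠ t' in nhds t, 0 < (ω * (v t' (f q) / v t (f q))).im ∧
          0 < (zt N * (ω * (v t' (f q) / v t (f q)))).im := by
        intro q
        have hq := hEt.reg _ (hf q)
        have hc : Continuous fun t' => v t' (f q) := by
          simp only [hva]; fun_prop
        have hc1 : Continuous fun t' => (ω * (v t' (f q) / v t (f q))).im :=
          Complex.continuous_im.comp (continuous_const.mul (hc.div_const _))
        have hc2 : Continuous fun t' => (zt N * (ω * (v t' (f q) / v t (f q)))).im :=
          Complex.continuous_im.comp
            (continuous_const.mul (continuous_const.mul (hc.div_const _)))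
        apply (hc1.continuousAt.eventually_const_lt (by beta_reduce; rwa [div_self hq, mul_one])).and
          (hc2.continuousAt.eventually_const_lt (by beta_reduce; rwa [div_self hq, mul_one]))
      have hnear' := Filter.eventually_all.mpr hnear
      filter_upwards [nhdsWithin_le_nhds hnear', self_mem_nhdsWithin] with t' ht1 ht2
      intro g g' hg hg'
      have hEt' := hEq t' ht2
      have hE3 := hEt'.smul hω
      obtain ⟨k, hk⟩ := exists_chamber hE3.reg
      have c1 := hsec hEt hE3 (by
        rintro α ⟨x, s, rfl⟩
        refine ⟨ω * (v t' (f (x, s)) / v t (f (x, s))), ?_, (ht1 (x, s)).1.le, (ht1 (x, s)).2.le⟩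
        have hq := hEt.reg _ (hf (x, s))
        rw [LinearMap.smul_apply, smul_eq_mul, mul_assoc, div_mul_cancel₀ _ hq]) hg hk
      have c2 := hsec hEt' hE3 (fun α _ => ⟨ω, by simp, hω1.le, hω2.le⟩) hg' hk
      exact c1.trans c2.symm
    · intro a b c _ hb _ hab hbc g g' hg hg'
      obtain ⟨k, hk⟩ := exists_chamber (hEq b hb).reg
      exact (hab g k hg hk).trans (hbc k g' hk hg')
    · intro a b _ _ hab g g' hg hg'
      exact (hab g' g hg' hg).symm
    · intro h
      obtain ⟨q, hq⟩ := Set.mem_iUnion.mp h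
      rw [Set.mem_ofPred_eq, hva] at hq
      exact h₀.reg _ (hf q) (by simpa using hq)
    · intro h
      obtain ⟨q, hq⟩ := Set.mem_iUnion.mp h
      rw [Set.mem_ofPred_eq, hva] at hq
      exact h₁.reg _ (hf q) (by simpa using hq)
  apply hP g₀ g₁
  · have : v 0 = v₀ := by simp [v]
    rwa [this]
  · have : v 1 = v₁ := by simp [v]
    rwa [this]

/-- conjugate good elements have conjugate lifts -/
theorem Good.conj_lift [Finite W] {Γ : Type*} [Group Γ] (ι : ArtinTitsMonoid M →* Γ) {w w' : W} {N : ℕ}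
    (h : Good cs w N) (h' : Good cs w' N) (x : W) (hx : w' = x⁻¹ * w * x) :
    IsConj (ι (r cs w)) (ι (r cs w')) := by
  obtain ⟨v, g, hv, hg, e⟩ := h.exists_eqv
  obtain ⟨v', g', hv', hg', e'⟩ := h'.exists_eqv
  have c1 : IsConj (ι (r cs w)) (ι (r cs (g⁻¹ * w * g))) :=
    isConj_of_mul (c := ι (r cs g)) (by rw [← map_mul, ← map_mul, e])
  have c2 : IsConj (ι (r cs w')) (ι (r cs (g'⁻¹ * w' * g'))) :=
    isConj_of_mul (c := ι (r cs g')) (by rw [← map_mul, ← map_mul, e'])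
  have hE : Eqv cs w N (v' ∘ₗ rep cs x⁻¹) := by
    refine ⟨?_, ?_⟩
    · intro β hβ; exact hv'.reg _ (hβ.rep _)
    · intro β
      rw [LinearMap.comp_apply, LinearMap.comp_apply, ← hv'.eqv, ← rep_mul_apply, ← rep_mul_apply, hx]
      congr 3; group
  have hC : Chamber cs (v' ∘ₗ rep cs x⁻¹) (x * g') := by
    intro s
    rw [LinearMap.comp_apply, ← rep_mul_apply, inv_mul_cancel_left]
    exact hg' s
  have c3 := conn ι h.three hv hE hg hC
  have e3 : (x * g')⁻¹ * w * (x * g') = g'⁻¹ * w' * g' := by rw [hx]; group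
  rw [e3] at c3
  exact (c1.trans c3).trans c2.symm

end conn
end ATM


namespace ATM

/-! ## graded linear maps on polynomials -/
section graded
open MvPolynomial
variable {B : Type*}

lemma hc_sum (f : MvPolynomial B ℂ) (n : ℕ) (h : ∀ i ≥ n, homogeneousComponent i f = 0) :
    f = ∑ i ∈ Finset.range n, homogeneousComponent i f := by
  conv_lhs => rw [← sum_homogeneousComponent f]
  rcases le_total (f.totalDegree + 1) n with h1 | h1
  · refine Finset.sum_subset (by simpa using h1) ?_
    intro i _ hi
    apply homogeneousComponent_eq_zero
    simp at hi; omega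
  · symm
    refine Finset.sum_subset (by simpa using h1) ?_
    intro i _ hi
    exact h i (by simpa using hi)

lemma hc_zero_all (f : MvPolynomial B ℂ) (h : ∀ i, homogeneousComponent i f = 0) : f = 0 := by
  rw [hc_sum f 0 (fun i _ => h i)]; simp

lemma hc_hc (k : ℕ) (f : MvPolynomial B ℂ) (i : ℕ) :
    homogeneousComponent i (homogeneousComponent k f) = if i = k then homogeneousComponent k f else 0 :=
  homogeneousComponent_of_mem (homogeneousComponent_mem k f)

lemma hc_of (k : ℕ) {f : MvPolynomial B ℂ} (hf : f.IsHomogeneous k) (i : ℕ) :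
    homogeneousComponent i f = if i = k then f else 0 :=
  homogeneousComponent_of_mem hf

lemma hc_lin (T : MvPolynomial B ℂ →ₗ[ℂ] MvPolynomial B ℂ) (d : ℕ)
    (hT : ∀ k f, f.IsHomogeneous k → (T f).IsHomogeneous (k + d)) (k : ℕ) (f : MvPolynomial B ℂ) :
    homogeneousComponent (k + d) (T f) = T (homogeneousComponent k f) := by
  have h0 := hc_sum f (f.totalDegree + 1) (fun i hi => homogeneousComponent_eq_zero _ _ (by omega))
  conv_lhs => rw [h0]
  rw [map_sum, map_sum]
  have : ∀ i ∈ Finset.range (f.totalDegree + 1),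
      homogeneousComponent (k + d) (T (homogeneousComponent i f)) =
      if i = k then T (homogeneousComponent k f) else 0 := by
    intro i _
    rw [hc_of _ (hT i _ (homogeneousComponent_isHomogeneous i f))]
    by_cases h : i = k
    · subst h; simp
    · rw [if_neg (by omega), if_neg h]
  rw [Finset.sum_congr rfl this, Finset.sum_ite_eq']
  split_ifs with h
  · rfl
  · rw [homogeneousComponent_eq_zero _ f (by simp at h; omega), map_zero]

lemma hc_lin_low (T : MvPolynomial B ℂ →ₗ[ℂ] MvPolynomial B ℂ) (d : ℕ)
    (hT : ∀ k f, f.IsHomogeneous k → (T f).IsHomogeneous (k + d)) (k : ℕ) (hk : k < d)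
    (f : MvPolynomial B ℂ) :
    homogeneousComponent k (T f) = 0 := by
  have h0 := hc_sum f (f.totalDegree + 1) (fun i hi => homogeneousComponent_eq_zero _ _ (by omega))
  rw [h0]
  rw [map_sum, map_sum]
  apply Finset.sum_eq_zero
  intro i _
  rw [hc_of _ (hT i _ (homogeneousComponent_isHomogeneous i f)), if_neg (by omega)]

lemma hc_mul (g : MvPolynomial B ℂ) (d : ℕ) (hg : g.IsHomogeneous d) (k : ℕ) (f : MvPolynomial B ℂ) :
    homogeneousComponent (k + d) (f * g) = homogeneousComponent k f * g := by
  have := hc_lin (LinearMap.mulRight ℂ g) d (fun k f hf => by simpa using hf.mul hg) k f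
  simpa using this

lemma hc_mul_low (g : MvPolynomial B ℂ) (d : ℕ) (hg : g.IsHomogeneous d) (k : ℕ) (hk : k < d)
    (f : MvPolynomial B ℂ) :
    homogeneousComponent k (f * g) = 0 := by
  have := hc_lin_low (LinearMap.mulRight ℂ g) d (fun k f hf => by simpa using hf.mul hg) k hk f
  simpa using this

lemma homog_aeval (g : B → MvPolynomial B ℂ) (hg : ∀ s, (g s).IsHomogeneous 1) {k : ℕ}
    {f : MvPolynomial B ℂ} (hf : f.IsHomogeneous k) : (aeval g f).IsHomogeneous k := by
  have := hf.aeval g hg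
  simpa using this

lemma hc_aeval (g : B → MvPolynomial B ℂ) (hg : ∀ s, (g s).IsHomogeneous 1) (k : ℕ)
    (f : MvPolynomial B ℂ) :
    homogeneousComponent k (aeval g f) = aeval g (homogeneousComponent k f) :=
  hc_lin (aeval g).toLinearMap 0 (fun _ _ hf => homog_aeval g hg hf) k f

end graded

/-! ## polynomial functions on the reflection representation -/
section springer
open MvPolynomial
variable {B : Type*} {M : CoxeterMatrix B} {W : Type*} [Group W] (cs : CoxeterSystem M W)

noncomputable def lin : (B →₀ ℝ) →ₗ[ℝ] MvPolynomial B ℂ := Finsupp.linearCombination ℝ X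

lemma lin_al (s : B) : lin (al s) = X s := by simp [lin, al]

lemma lin_homog (x : B →₀ ℝ) : (lin x).IsHomogeneous 1 := by
  rw [lin, Finsupp.linearCombination_apply, Finsupp.sum]
  refine IsHomogeneous.sum _ _ _ fun i _ => ?_
  have : x i • (X i : MvPolynomial B ℂ) = C (x i : ℂ) * X i := by
    rw [C_mul']; ext m; simp
  rw [this]
  simpa using (isHomogeneous_C B (x i : ℂ)).mul (isHomogeneous_X ℂ i)

noncomputable def act (w : W) : MvPolynomial B ℂ →ₐ[ℂ] MvPolynomial B ℂ :=
  aeval (fun s => lin (rep cs w (al s)))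

noncomputable def ev (v : (B →₀ ℝ) →ₗ[ℝ] ℂ) : MvPolynomial B ℂ →ₐ[ℂ] ℂ :=
  aeval (fun s => v (al s))

lemma ext_al {V : Type*} [AddCommGroup V] [Module ℝ V] {f g : (B →₀ ℝ) →ₗ[ℝ] V}
    (h : ∀ s, f (al s) = g (al s)) : f = g := by
  apply Finsupp.lhom_ext'
  intro s
  ext
  exact h s

lemma ev_lin (v : (B →₀ ℝ) →ₗ[ℝ] ℂ) (x : B →₀ ℝ) : ev v (lin x) = v x := by
  have : ((ev v).toLinearMap.restrictScalars ℝ) ∘ₗ lin = v := by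
    apply ext_al
    intro s
    simp [lin_al, ev]
  exact LinearMap.congr_fun this x

lemma act_lin (w : W) (x : B →₀ ℝ) : act cs w (lin x) = lin (rep cs w x) := by
  have : ((act cs w).toLinearMap.restrictScalars ℝ) ∘ₗ lin = lin ∘ₗ (rep cs w) := by
    apply ext_al
    intro s
    simp [lin_al, act]
  exact LinearMap.congr_fun this x

lemma ev_act (v : (B →₀ ℝ) →ₗ[ℝ] ℂ) (w : W) (f : MvPolynomial B ℂ) :
    ev v (act cs w f) = ev (v ∘ₗ rep cs w) f := by
  have : (ev v).comp (act cs w) = ev (v ∘ₗ rep cs w) := by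
    ext s
    simp [act, ev_lin]
    simp [ev]
  exact DFunLike.congr_fun this f

lemma act_mul (u w : W) (f : MvPolynomial B ℂ) : act cs (u * w) f = act cs u (act cs w f) := by
  have : (act cs u).comp (act cs w) = act cs (u * w) := by
    apply algHom_ext
    intro s
    have := act_lin cs u (rep cs w (al s))
    rw [← rep_mul_apply] at this
    simpa [act] using this
  exact (DFunLike.congr_fun this f).symm

lemma act_one (f : MvPolynomial B ℂ) : act cs 1 f = f := by
  have : act cs 1 = AlgHom.id ℂ _ := by
    apply algHom_ext
    intro s
    simp [act, lin_al]
  rw [this]; rfl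

noncomputable def sca (c : ℂ) : MvPolynomial B ℂ →ₐ[ℂ] MvPolynomial B ℂ :=
  aeval (fun s => C c * X s)

lemma ev_sca (v : (B →₀ ℝ) →ₗ[ℝ] ℂ) (c : ℂ) (f : MvPolynomial B ℂ) :
    ev v (sca c f) = ev (c • v) f := by
  have : (ev v).comp (sca c) = ev (c • v) := by
    apply algHom_ext
    intro s
    simp [sca, ev]
  exact DFunLike.congr_fun this f

lemma sca_homog (c : ℂ) {k : ℕ} {f : MvPolynomial B ℂ} (hf : f.IsHomogeneous k) :
    sca c f = c ^ k • f := by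
  have h : ∀ m ∈ f.support, sca c (monomial m (coeff m f)) = c ^ k • monomial m (coeff m f) := by
    intro m hm
    have h1 := hf (by simpa using hm : coeff m f ≠ 0)
    rw [sca, aeval_monomial, monomial_eq]
    rw [Finsupp.weight_apply] at h1
    simp only [Pi.one_apply, smul_eq_mul, mul_one] at h1
    simp only [mul_pow, Finsupp.prod_mul]
    have : (m.prod fun i n => (C c : MvPolynomial B ℂ) ^ n) = C (c ^ k) := by
      rw [Finsupp.prod, Finset.prod_pow_eq_pow_sum, ← h1, map_pow]; rfl
    rw [this, smul_eq_C_mul, algebraMap_eq]; ring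
  conv_lhs => rw [f.as_sum]
  conv_rhs => rw [f.as_sum]
  rw [map_sum, Finset.smul_sum]
  exact Finset.sum_congr rfl h

lemma act_homog (w : W) {k : ℕ} {f : MvPolynomial B ℂ} (hf : f.IsHomogeneous k) :
    (act cs w f).IsHomogeneous k := homog_aeval _ (fun _ => lin_homog _) hf

lemma hc_act (w : W) (k : ℕ) (f : MvPolynomial B ℂ) :
    homogeneousComponent k (act cs w f) = act cs w (homogeneousComponent k f) :=
  hc_aeval _ (fun _ => lin_homog _) k f

lemma hc_sca (c : ℂ) (k : ℕ) (f : MvPolynomial B ℂ) :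
    homogeneousComponent k (sca c f) = c ^ k • (homogeneousComponent k f) := by
  rw [← sca_homog c (homogeneousComponent_isHomogeneous k f)]
  refine hc_aeval _ (fun s => ?_) k f
  simpa using (isHomogeneous_C B c).mul (isHomogeneous_X ℂ s)

/-- the ideal of invariants of positive degree -/
noncomputable def JJ : Ideal (MvPolynomial B ℂ) :=
  Ideal.span {f | ∃ k, 0 < k ∧ f.IsHomogeneous k ∧ ∀ w, act cs w f = f}

lemma act_JJ (w : W) {f : MvPolynomial B ℂ} (hf : f ∈ JJ cs) : act cs w f ∈ JJ cs := by
  refine Submodule.span_induction (p := fun f _ => act cs w f ∈ JJ cs) ?_ ?_ ?_ ?_ hf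
  · rintro g ⟨k, hk, h1, h2⟩
    rw [h2]
    exact Ideal.subset_span ⟨k, hk, h1, h2⟩
  · simp
  · intro a b _ _ h1 h2
    rw [map_add]; exact add_mem h1 h2
  · intro a b _ h
    rw [smul_eq_mul, map_mul]; exact Ideal.mul_mem_left _ _ h

lemma hc_JJ (k : ℕ) {f : MvPolynomial B ℂ} (hf : f ∈ JJ cs) : homogeneousComponent k f ∈ JJ cs := by
  have : ∀ a, homogeneousComponent k (a * f) ∈ JJ cs := by
    refine Submodule.span_induction (p := fun f _ => ∀ a, homogeneousComponent k (a * f) ∈ JJ cs)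
      ?_ ?_ ?_ ?_ hf
    · rintro g ⟨d, hd, h1, h2⟩ a
      by_cases hk : k < d
      · rw [hc_mul_low g d h1 k hk]; exact zero_mem _
      · obtain ⟨e, rfl⟩ := Nat.exists_eq_add_of_le' (not_lt.mp hk)
        rw [hc_mul g d h1]
        exact Ideal.mul_mem_left _ _ (Ideal.subset_span ⟨d, hd, h1, h2⟩)
    · simp
    · intro a b _ _ h1 h2 c
      rw [mul_add, map_add]; exact add_mem (h1 c) (h2 c)
    · intro a b _ h c
      rw [smul_eq_mul, ← mul_assoc]; exact h _
  simpa using this 1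

lemma smul_JJ (c : ℂ) {f : MvPolynomial B ℂ} (hf : f ∈ JJ cs) : c • f ∈ JJ cs := by
  rw [smul_eq_C_mul]; exact Ideal.mul_mem_left _ _ hf

lemma act_dvd (s : B) (F : MvPolynomial B ℂ) : X s ∣ F - act cs (cs.simple s) F := by
  induction F using MvPolynomial.induction_on with
  | C a => simp
  | add p q hp hq =>
    rw [map_add]
    have := dvd_add hp hq
    convert this using 1; ring
  | mul_X p t hp =>
    rw [map_mul]
    have h1 : X s ∣ (X t - act cs (cs.simple s) (X t) : MvPolynomial B ℂ) := by
      rw [← lin_al t, act_lin, rep_simple, sig_apply, map_add, map_smul, lin_al s]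
      refine ⟨- C ((phi M s (al t) : ℝ) : ℂ), ?_⟩
      have : phi M s (al t) • (X s : MvPolynomial B ℂ) = C ((phi M s (al t) : ℝ) : ℂ) * X s := by
        rw [C_mul']; ext m; simp
      rw [this]; ring
    have : p * X t - act cs (cs.simple s) p * act cs (cs.simple s) (X t) =
        (p - act cs (cs.simple s) p) * X t +
        act cs (cs.simple s) p * (X t - act cs (cs.simple s) (X t)) := by ring
    rw [this]
    exact dvd_add (hp.mul_right _) (h1.mul_left _)

lemma sp1 [Finite W] {v : (B →₀ ℝ) →ₗ[ℝ] ℂ} (hv : Reg cs v) (k : ℕ) :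
    ∀ F : MvPolynomial B ℂ, (∀ i > k, homogeneousComponent i F = 0) →
    (∀ x, ev (v ∘ₗ rep cs x) F = 0) → homogeneousComponent k F ∈ JJ cs := by
  induction k with
  | zero =>
    intro F h1 h2
    have h3 := hc_sum F 1 (fun i hi => h1 i hi)
    simp only [Finset.range_one, Finset.sum_singleton] at h3
    rw [homogeneousComponent_zero] at h3 ⊢
    have h4 := h2 1
    rw [h3] at h4
    have h5 : coeff 0 F = 0 := by simpa [ev] using h4
    rw [h5]; simp
  | succ k ih =>
    intro F h1 h2
    set f := homogeneousComponent (k + 1) F with hf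
    have hs : ∀ s, f - act cs (cs.simple s) f ∈ JJ cs := by
      intro s
      obtain ⟨q, hq⟩ := act_dvd cs s F
      have hq2 : ∀ i, homogeneousComponent (i + 1) (F - act cs (cs.simple s) F) =
          homogeneousComponent i q * X s := by
        intro i
        rw [hq, mul_comm, hc_mul _ 1 (isHomogeneous_X ℂ s)]
      have hq3 := ih q (by
        intro i hi
        have := hq2 i
        rw [map_sub, hc_act, h1 (i + 1) (by omega), map_zero, sub_zero] at this
        rcases mul_eq_zero.mp this.symm with h | h
        · exact h
        · exact absurd h (X_ne_zero s)) (by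
        intro x
        have h3 := congrArg (ev (v ∘ₗ rep cs x)) hq
        rw [map_sub, ev_act, h2, LinearMap.comp_assoc] at h3
        have h4 : rep cs x ∘ₗ rep cs (cs.simple s) = rep cs (x * cs.simple s) := by
          rw [map_mul]; rfl
        rw [h4, h2, map_mul, sub_zero] at h3
        rcases mul_eq_zero.mp h3.symm with h | h
        · rw [← lin_al, ev_lin] at h
          exact absurd h (hv _ ((isRoot_al cs s).rep x))
        · exact h)
      have := hq2 k
      rw [map_sub, hc_act] at this
      rw [hf, this]
      exact Ideal.mul_mem_right _ _ hq3
    have hw : ∀ w, f - act cs w f ∈ JJ cs := by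
      intro w
      induction w using cs.simple_induction_left with
      | one => rw [act_one]; simp
      | mul_simple_left w s hw =>
        rw [act_mul]
        have := add_mem (hs s) (act_JJ cs (cs.simple s) hw)
        rw [map_sub] at this
        convert this using 1; ring
    have := Fintype.ofFinite W
    have h3 : ∑ w : W, (f - act cs w f) ∈ JJ cs := sum_mem fun w _ => hw w
    have h4 : ∑ w : W, act cs w f ∈ JJ cs := by
      refine Ideal.subset_span ⟨k + 1, by omega, IsHomogeneous.sum _ _ _ fun w _ =>
        act_homog cs w (homogeneousComponent_isHomogeneous _ _), fun u => ?_⟩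
      rw [map_sum]
      simp only [← act_mul]
      exact Fintype.sum_equiv (Equiv.mulLeft u) _ _ (fun w => rfl)
    have h5 := add_mem h3 h4
    rw [Finset.sum_sub_distrib, sub_add_cancel, Finset.sum_const, Finset.card_univ] at h5
    have h6 := smul_JJ cs ((Fintype.card W : ℂ)⁻¹) h5
    rw [← Nat.cast_smul_eq_nsmul ℂ, smul_smul, inv_mul_cancel₀ (by simp), one_smul] at h6
    exact h6

end springer
end ATM


namespace ATM

section springer2
open MvPolynomial
variable {B : Type*} {M : CoxeterMatrix B} {W : Type*} [Group W] (cs : CoxeterSystem M W)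

lemma exists_harm [Finite W] : ∃ H : Submodule ℂ (MvPolynomial B ℂ),
    (∀ f ∈ H, ∀ k, homogeneousComponent k f ∈ H) ∧
    (∀ f ∈ H, ∀ w, act cs w f ∈ H) ∧
    (∀ f ∈ H, ∀ c, sca c f ∈ H) ∧
    (∀ f ∈ H, f ∈ JJ cs → f = 0) ∧
    (∀ k f, f.IsHomogeneous k → ∃ h ∈ H, ∃ j ∈ JJ cs, j.IsHomogeneous k ∧ f = h + j) := by
  have := Fintype.ofFinite W
  let J' : Submodule ℂ (MvPolynomial B ℂ) := (JJ cs).restrictScalars ℂ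
  obtain ⟨π₀, hπ⟩ := LinearMap.exists_leftInverse_of_injective J'.subtype (by simp)
  have hπ1 : ∀ f (hf : f ∈ J'), (π₀ f : MvPolynomial B ℂ) = f := by
    intro f hf
    have := LinearMap.congr_fun hπ ⟨f, hf⟩
    exact congrArg Subtype.val this
  let P : MvPolynomial B ℂ →ₗ[ℂ] MvPolynomial B ℂ :=
    ∑ w : W, (act cs w).toLinearMap ∘ₗ J'.subtype ∘ₗ π₀ ∘ₗ (act cs w⁻¹).toLinearMap
  have hP : ∀ f, P f = ∑ w : W, act cs w (π₀ (act cs w⁻¹ f)) := by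
    intro f; simp [P, LinearMap.sum_apply]
  have hPJ : ∀ f, P f ∈ JJ cs := by
    intro f
    rw [hP]
    exact sum_mem fun w _ => act_JJ cs w (π₀ (act cs w⁻¹ f)).2
  have hPJ2 : ∀ f ∈ JJ cs, P f = (Fintype.card W : ℂ) • f := by
    intro f hf
    rw [hP, Nat.cast_smul_eq_nsmul, ← Finset.card_univ, ← Finset.sum_const]
    refine Finset.sum_congr rfl fun w _ => ?_
    rw [hπ1 _ (act_JJ cs w⁻¹ hf), ← act_mul, mul_inv_cancel, act_one]
  have hPact : ∀ u f, P (act cs u f) = act cs u (P f) := by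
    intro u f
    rw [hP, hP, map_sum]
    refine Fintype.sum_equiv (Equiv.mulLeft u⁻¹) _ _ (fun w => ?_)
    simp only [Equiv.coe_mulLeft]
    rw [← act_mul, ← act_mul, mul_inv_rev, inv_inv, mul_inv_cancel_left]
  let H : Submodule ℂ (MvPolynomial B ℂ) :=
    ⨅ k, LinearMap.ker (homogeneousComponent k ∘ₗ P ∘ₗ homogeneousComponent k)
  have hH : ∀ f, f ∈ H ↔ ∀ k, homogeneousComponent k (P (homogeneousComponent k f)) = 0 := by
    intro f; simp [H, Submodule.mem_iInf]
  have hc0 : (Fintype.card W : ℂ) ≠ 0 := by simp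
  refine ⟨H, ?_, ?_, ?_, ?_, ?_⟩
  · intro f hf k
    rw [hH] at hf ⊢
    intro i
    rw [hc_hc]
    split_ifs with h
    · subst h; exact hf i
    · simp
  · intro f hf w
    rw [hH] at hf ⊢
    intro i
    rw [hc_act, hPact, hc_act, hf, map_zero]
  · intro f hf c
    rw [hH] at hf ⊢
    intro i
    rw [hc_sca, map_smul, map_smul, hf, smul_zero]
  · intro f hf hJ
    rw [hH] at hf
    apply hc_zero_all
    intro i
    have := hf i
    rw [hPJ2 _ (hc_JJ cs i hJ), map_smul, hc_hc, if_pos rfl] at this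
    exact (smul_eq_zero.mp this).resolve_left hc0
  · intro k f hf
    have hfk : homogeneousComponent k f = f := by rw [hc_of k hf, if_pos rfl]
    let j := (Fintype.card W : ℂ)⁻¹ • homogeneousComponent k (P f)
    have hj : j ∈ JJ cs := smul_JJ cs _ (hc_JJ cs k (hPJ f))
    have hjk : j.IsHomogeneous k :=
      Submodule.smul_mem (homogeneousSubmodule B ℂ k) _ (homogeneousComponent_mem k _)
    refine ⟨f - j, ?_, j, hj, hjk, by ring⟩
    rw [hH]
    intro i
    rw [map_sub, hc_of k hf, hc_of k hjk]
    split_ifs with h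
    · subst h
      rw [map_sub, hPJ2 j hj, map_sub, map_smul, hc_of i hjk, if_pos rfl]
      simp only [j]
      rw [smul_smul, mul_inv_cancel₀ hc0, one_smul, sub_self]
    · simp

lemma chamber_unique {v : (B →₀ ℝ) →ₗ[ℝ] ℂ} {a b : W} (ha : Chamber cs v a) (hb : Chamber cs v b) :
    a = b := by
  by_contra hab
  have h1 : a⁻¹ * b ≠ 1 := fun h => hab (inv_mul_eq_one.mp h)
  obtain ⟨s, hs⟩ := cs.exists_rightDescent_of_ne_one h1
  have h2 : 0 < rho (rep cs (a⁻¹ * b) (al s)) := by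
    rw [rep_mul_apply]
    exact (ha.pos_iff ((isRoot_al cs s).rep b)).2 (hb s)
  have h3 := (ascR_iff cs _ s).2 h2
  have h4 : cs.length (a⁻¹ * b * cs.simple s) < cs.length (a⁻¹ * b) := hs
  omega

lemma orbit_inj [Finite W] {v : (B →₀ ℝ) →ₗ[ℝ] ℂ} (hv : Reg cs v) {x y : W}
    (h : v ∘ₗ rep cs x⁻¹ = v ∘ₗ rep cs y⁻¹) : x = y := by
  obtain ⟨g, hg⟩ := exists_chamber hv
  have key : ∀ x, Chamber cs (v ∘ₗ rep cs x⁻¹) (x * g) := by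
    intro x s
    rw [LinearMap.comp_apply, ← rep_mul_apply, inv_mul_cancel_left]
    exact hg s
  have h1 := key x
  rw [h] at h1
  exact mul_right_cancel (chamber_unique cs h1 (key y))

noncomputable def EE (v : (B →₀ ℝ) →ₗ[ℝ] ℂ) : MvPolynomial B ℂ →ₐ[ℂ] (W → ℂ) :=
  Pi.algHom ℂ (fun _ => ℂ) (fun x => ev (v ∘ₗ rep cs x⁻¹))

lemma EE_apply (v : (B →₀ ℝ) →ₗ[ℝ] ℂ) (f : MvPolynomial B ℂ) (x : W) :
    EE cs v f x = ev (v ∘ₗ rep cs x⁻¹) f := rfl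

lemma EE_surj [Finite W] {v : (B →₀ ℝ) →ₗ[ℝ] ℂ} (hv : Reg cs v) :
    Function.Surjective (EE cs v) := by
  classical
  have := Fintype.ofFinite W
  have h1 : ∀ x y : W, x ≠ y → ∃ s, v (rep cs x⁻¹ (al s)) ≠ v (rep cs y⁻¹ (al s)) := by
    intro x y hxy
    by_contra! h
    exact hxy (orbit_inj cs hv (ext_al h))
  have h2 : ∀ x y : W, ∃ p : MvPolynomial B ℂ, x ≠ y → EE cs v p x ≠ 0 ∧ EE cs v p y = 0 := by
    intro x y
    by_cases hxy : x = y
    · exact ⟨0, fun h => absurd hxy h⟩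
    obtain ⟨s, hs⟩ := h1 x y hxy
    refine ⟨X s - C (v (rep cs y⁻¹ (al s))), fun _ => ?_⟩
    constructor
    · simp only [EE_apply, map_sub, ← lin_al, ev_lin]
      simpa [ev, sub_eq_zero] using hs
    · simp only [EE_apply, map_sub, ← lin_al, ev_lin]
      simp [ev]
  choose p hp using h2
  let q : W → MvPolynomial B ℂ := fun x => ∏ y ∈ Finset.univ.erase x, p x y
  have hq1 : ∀ x, EE cs v (q x) x ≠ 0 := by
    intro x
    simp only [q, map_prod, Finset.prod_apply]
    exact Finset.prod_ne_zero_iff.2 fun y hy => (hp x y (Finset.ne_of_mem_erase hy).symm).1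
  have hq2 : ∀ x y, x ≠ y → EE cs v (q x) y = 0 := by
    intro x y hxy
    simp only [q, map_prod, Finset.prod_apply]
    exact Finset.prod_eq_zero (Finset.mem_erase.2 ⟨hxy.symm, Finset.mem_univ _⟩) (hp x y hxy).2
  intro F
  refine ⟨∑ x, (F x / EE cs v (q x) x) • q x, ?_⟩
  ext y
  rw [map_sum, Finset.sum_apply, Finset.sum_eq_single y]
  · simp only [map_smul, Pi.smul_apply, smul_eq_mul]
    exact div_mul_cancel₀ _ (hq1 y)
  · intro x _ hxy
    simp only [map_smul, Pi.smul_apply, smul_eq_mul, hq2 x y hxy, mul_zero]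
  · simp

lemma EE_bij [Finite W] {v : (B →₀ ℝ) →ₗ[ℝ] ℂ} (hv : Reg cs v)
    {H : Submodule ℂ (MvPolynomial B ℂ)}
    (h1 : ∀ f ∈ H, ∀ k, homogeneousComponent k f ∈ H)
    (h4 : ∀ f ∈ H, f ∈ JJ cs → f = 0)
    (h5 : ∀ k f, f.IsHomogeneous k → ∃ h ∈ H, ∃ j ∈ JJ cs, j.IsHomogeneous k ∧ f = h + j) :
    Function.Bijective ((EE cs v).toLinearMap ∘ₗ H.subtype) := by
  constructor
  · rw [injective_iff_map_eq_zero]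
    rintro ⟨f, hf⟩ h0
    have h0' : EE cs v f = 0 := h0
    have hE : ∀ x, ev (v ∘ₗ rep cs x) f = 0 := by
      intro x
      have := congrFun h0' x⁻¹
      rwa [EE_apply, inv_inv] at this
    have key : ∀ k, (∀ i ≥ k, homogeneousComponent i f = 0) → f = 0 := by
      intro k
      induction k with
      | zero => intro h; exact hc_zero_all f fun i => h i (by omega)
      | succ k ih =>
        intro h
        apply ih
        intro i hi
        rcases Nat.lt_or_ge k i with hlt | hge
        · exact h i hlt
        · obtain rfl : i = k := by omega
          exact h4 _ (h1 f hf i) (sp1 cs hv i f (fun j hj => h j hj) hE)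
    have := key (f.totalDegree + 1) (fun i hi => homogeneousComponent_eq_zero _ _ (by omega))
    exact Subtype.ext this
  · let K : Submodule ℂ (MvPolynomial B ℂ) :=
      (H.map (EE cs v).toLinearMap).comap (EE cs v).toLinearMap
    have hHK : H ≤ K := fun f hf => ⟨f, hf, rfl⟩
    have key : ∀ k f, f.IsHomogeneous k → f ∈ K := by
      intro k
      induction k using Nat.strong_induction_on with
      | _ k ih =>
      intro f hf
      obtain ⟨h, hh, j, hj, hjk, rfl⟩ := h5 k f hf
      refine add_mem (hHK hh) ?_
      have : ∀ a, homogeneousComponent k (a * j) ∈ K := by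
        refine Submodule.span_induction (p := fun j _ => ∀ a, homogeneousComponent k (a * j) ∈ K)
          ?_ ?_ ?_ ?_ hj
        · rintro g ⟨d, hd, hg1, hg2⟩ a
          by_cases hk : k < d
          · rw [hc_mul_low g d hg1 k hk]; exact zero_mem _
          · obtain ⟨e, rfl⟩ := Nat.exists_eq_add_of_le' (not_lt.mp hk)
            rw [hc_mul g d hg1]
            have h6 := ih e (by omega) _ (homogeneousComponent_isHomogeneous e a)
            have h7 : EE cs v (homogeneousComponent e a * g) =
                (ev v g) • EE cs v (homogeneousComponent e a) := by
              ext x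
              rw [map_mul, Pi.mul_apply, Pi.smul_apply, smul_eq_mul, mul_comm, EE_apply cs v g,
                ← ev_act, hg2]
            change EE cs v (homogeneousComponent e a * g) ∈ H.map (EE cs v).toLinearMap
            rw [h7]
            exact Submodule.smul_mem _ _ h6
        · simp
        · intro a b _ _ h1 h2 c
          rw [mul_add, map_add]; exact add_mem (h1 c) (h2 c)
        · intro a b _ h c
          rw [smul_eq_mul, ← mul_assoc]; exact h _
      have h8 := this 1
      rwa [one_mul, hc_of k hjk, if_pos rfl] at h8
    intro F
    obtain ⟨f, rfl⟩ := EE_surj cs hv F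
    have hfK : f ∈ K := by
      rw [hc_sum f (f.totalDegree + 1) (fun i hi => homogeneousComponent_eq_zero _ _ (by omega))]
      exact sum_mem fun i _ => key i _ (homogeneousComponent_isHomogeneous i f)
    obtain ⟨h, hh, he⟩ := hfK
    exact ⟨⟨h, hh⟩, he⟩

lemma trace_funLeft [Fintype W] [DecidableEq W] (f : W → W) :
    LinearMap.trace ℂ (W → ℂ) (LinearMap.funLeft ℂ ℂ f) =
      ((Finset.univ.filter fun x => f x = x).card : ℂ) := by
  rw [LinearMap.trace_eq_matrix_trace ℂ (Pi.basisFun ℂ W), Matrix.trace]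
  simp [LinearMap.toMatrix_apply, LinearMap.funLeft_apply, Pi.single_apply]

variable {cs}

theorem springer [Finite W] {w w' : W} {N : ℕ} {v v' : (B →₀ ℝ) →ₗ[ℝ] ℂ}
    (hv : Eqv cs w N v) (hv' : Eqv cs w' N v') : ∃ x, w' = x⁻¹ * w * x := by
  classical
  have := Fintype.ofFinite W
  obtain ⟨H, h1, h2, h3, h4, h5⟩ := exists_harm cs
  let e := LinearEquiv.ofBijective _ (EE_bij cs hv.reg h1 h4 h5)
  let e' := LinearEquiv.ofBijective _ (EE_bij cs hv'.reg h1 h4 h5)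
  have key : ∀ {w : W} {v : (B →₀ ℝ) →ₗ[ℝ] ℂ} (hv : Eqv cs w N v) (g x : W) (f : MvPolynomial B ℂ),
      EE cs v (act cs g (sca (zt N) f)) x = EE cs v f (g⁻¹ * x * w) := by
    intro w v hv g x f
    rw [EE_apply, EE_apply, ev_act, ev_sca]
    congr 2
    apply ext_al
    intro s
    simp only [LinearMap.smul_apply, LinearMap.comp_apply, smul_eq_mul]
    rw [← hv.eqv, ← rep_mul_apply, ← rep_mul_apply]
    congr 3
    group
  let T : W → ((W → ℂ) →ₗ[ℂ] (W → ℂ)) := fun u => LinearMap.funLeft ℂ ℂ (fun x => w⁻¹ * x * u)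
  let φ := e.symm.trans e'
  have hφ : ∀ F, φ (T w F) = T w' (φ F) := by
    intro F
    obtain ⟨⟨f, hf⟩, rfl⟩ := e.surjective F
    have ha : T w (e ⟨f, hf⟩) = e ⟨act cs w (sca (zt N) f), h2 _ (h3 _ hf _) _⟩ := by
      ext x
      exact (key hv w x f).symm
    have hb : T w' (e' ⟨f, hf⟩) = e' ⟨act cs w (sca (zt N) f), h2 _ (h3 _ hf _) _⟩ := by
      ext x
      exact (key hv' w x f).symm
    rw [ha]
    simp only [φ, LinearEquiv.trans_apply, LinearEquiv.symm_apply_apply]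
    rw [hb]
  have hT : φ.conj (T w) = T w' := by
    apply LinearMap.ext
    intro F
    rw [LinearEquiv.conj_apply_apply, hφ, LinearEquiv.apply_symm_apply]
  have htr := LinearMap.trace_conj' (T w) φ
  rw [hT] at htr
  simp only [T, trace_funLeft] at htr
  have hcard := Nat.cast_injective htr
  have hpos : 0 < (Finset.univ.filter fun x => w⁻¹ * x * w = x).card :=
    Finset.card_pos.2 ⟨1, by simp⟩
  rw [← hcard] at hpos
  obtain ⟨x, hx⟩ := Finset.card_pos.1 hpos
  rw [Finset.mem_filter] at hx
  refine ⟨x, ?_⟩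
  have hx2 := hx.2
  have : x * w' = w * x := by
    rw [mul_assoc, inv_mul_eq_iff_eq_mul] at hx2
    exact hx2
  rw [mul_assoc, ← this, inv_mul_cancel_left]

end springer2
end ATM


namespace ATM

section assembly
universe u2
variable {B : Type u2} {M : CoxeterMatrix B} {W : Type*} [Group W] {cs : CoxeterSystem M W} [Finite W]
  {w₀ : W}

lemma good_of (hw₀ : ∀ w : W, cs.length w ≤ cs.length w₀) {a : ArtinTitsMonoid M} {N : ℕ}
    (hN : 3 ≤ N) (h1 : a ^ N = r cs w₀ ^ 2)
    (h2 : ∀ j, 2 * j ≤ N → ∃ c, a ^ j * c = r cs w₀)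
    (h3 : ∀ j, N ≤ 2 * j → ∃ y, a ^ j = r cs w₀ * y) :
    a = r cs (projW cs a) ∧ Good cs (projW cs a) N := by
  set w := projW cs a with hw
  have hj : ∀ j, 2 * j ≤ N → a ^ j = r cs (w ^ j) := by
    intro j hj
    obtain ⟨c, hc⟩ := h2 j hj
    obtain ⟨u, v, hu, -⟩ := factor_simple hc
    have := congrArg (projW cs) hu
    rw [map_pow, projW_r, ← hw] at this
    rw [hu, this]
  refine ⟨by simpa using hj 1 (by omega), hN, ?_, ?_, ?_⟩
  · have := congrArg (projW cs) h1
    rw [map_pow, map_pow, projW_r, sq, w0_sq hw₀] at this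
    exact this
  · intro i j hij
    have e : len (a ^ (i + j)) = len (a ^ i) + len (a ^ j) := by rw [pow_add, len_mul]
    rw [hj _ hij, hj i (by omega), hj j (by omega), len_r, len_r, len_r, pow_add] at e
    exact e
  · intro β hβ h0 hh
    obtain ⟨y, hy⟩ := h3 (N - N / 2) (by omega)
    set h := N / 2 with hdef
    obtain ⟨ε, hε⟩ : ∃ ε, N - h = h + ε := ⟨N - 2 * h, by omega⟩
    rw [hε] at hy ⊢
    have e1 := r_mul (w0_le hw₀ (w ^ h))
    rw [mul_inv_cancel_left] at e1
    rw [← e1, pow_add, hj h (by omega), hj ε (by omega), mul_assoc] at hy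
    have hy2 := left_cancel cs hy
    obtain ⟨u, v, hu, -, huv, hadd⟩ := factor_simple hy2.symm
    have := congrArg (projW cs) hu
    rw [projW_r, projW_r] at this
    subst this
    have key := hadd.crit (hβ.rep (w ^ h)⁻¹) hh (by
      rw [← rep_mul_apply]
      have : ((w ^ h)⁻¹ * w₀)⁻¹ * (w ^ h)⁻¹ = w₀⁻¹ := by group
      rw [this]
      exact w0_neg hw₀ hβ h0)
    rw [huv, ← rep_mul_apply, ← mul_inv_rev, ← pow_add] at key
    exact key

theorem main_aux (hw₀ : ∀ w : W, cs.length w ≤ cs.length w₀) {x y : ArtinTitsMonoid M} {N K : ℕ}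
    (hN : 0 < N) (hK : 0 < K) (hx : x ^ N = (r cs w₀ ^ 2) ^ K) (hy : y ^ N = (r cs w₀ ^ 2) ^ K) :
    Cyc x y := by
  obtain ⟨Γ, _, ι, hinj, hfr, G⟩ := exists_GG hw₀
  have hx' : ι x ^ N = (ι (r cs w₀) ^ 2) ^ K := by
    rw [← map_pow, ← map_pow, ← map_pow, hx]
  have hy' : ι y ^ N = (ι (r cs w₀) ^ 2) ^ K := by
    rw [← map_pow, ← map_pow, ← map_pow, hy]
  obtain ⟨b, z, hz1, hz2, hz3, hz4, hz5⟩ := G.periodic ⟨x, rfl⟩ hN hK hx'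
  obtain ⟨b', z', hz1', hz2', hz3', hz4', hz5'⟩ := G.periodic ⟨y, rfl⟩ hN hK hy'
  have hN1 : 0 < N / N.gcd K :=
    Nat.div_pos (Nat.gcd_le_left K hN) (Nat.gcd_pos_of_pos_left K hN)
  generalize N / N.gcd K = N₁ at *
  generalize K / N.gcd K = K₁ at *
  have hconj : IsConj z z' := by
    by_cases c1 : N₁ = 1
    · subst c1
      rw [pow_one] at hz1 hz1'
      rw [hz1, hz1']
    by_cases c2 : N₁ = 2
    · subst c2
      have key : ∀ z : Γ, z⁻¹ * ι (r cs w₀) ∈ MonoidHom.mrange ι →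
          (ι (r cs w₀))⁻¹ * z ∈ MonoidHom.mrange ι → z = ι (r cs w₀) := by
        intro z e1 e2
        have := G.anti _ e1 (by rwa [mul_inv_rev, inv_inv])
        exact inv_mul_eq_one.mp this
      have e1 := hz4 1 (by norm_num)
      have e2 := hz5 1 (by norm_num)
      have e3 := hz4' 1 (by norm_num)
      have e4 := hz5' 1 (by norm_num)
      rw [pow_one] at e1 e2 e3 e4
      rw [key z e1 e2, key z' e3 e4]
    have hthree : 3 ≤ N₁ := by omega
    have good : ∀ z : Γ, z ^ N₁ = ι (r cs w₀) ^ 2 → z ∈ MonoidHom.mrange ι →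
        (∀ j : ℕ, 2 * j ≤ N₁ → (z ^ j)⁻¹ * ι (r cs w₀) ∈ MonoidHom.mrange ι) →
        (∀ j : ℕ, N₁ ≤ 2 * j → (ι (r cs w₀))⁻¹ * z ^ j ∈ MonoidHom.mrange ι) →
        ∃ w, z = ι (r cs w) ∧ Good cs w N₁ := by
      rintro _ f1 ⟨a, rfl⟩ f2 f3
      have := good_of hw₀ (a := a) hthree (hinj (by rw [map_pow, map_pow, f1])) (by
          intro j hj
          obtain ⟨c, hc⟩ := f2 j hj
          refine ⟨c, hinj ?_⟩
          rw [map_mul, hc, map_pow, mul_inv_cancel_left]) (by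
          intro j hj
          obtain ⟨c, hc⟩ := f3 j hj
          refine ⟨c, hinj ?_⟩
          rw [map_mul, hc, map_pow, mul_inv_cancel_left])
      exact ⟨projW cs a, congrArg ι this.1, this.2⟩
    obtain ⟨w, rfl, hw⟩ := good z hz1 hz3 hz4 hz5
    obtain ⟨w', rfl, hw'⟩ := good z' hz1' hz3' hz4' hz5'
    obtain ⟨v, g, hv, -⟩ := hw.exists_eqv
    obtain ⟨v', g', hv', -⟩ := hw'.exists_eqv
    obtain ⟨t, ht⟩ := springer hv hv'
    exact hw.conj_lift ι hw' t ht
  have hc2 : IsConj (ι x) (ι y) := by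
    have a1 : IsConj (ι x) (z ^ K₁) := isConj_of_mul (c := b) (by rw [← hz2]; group)
    have a2 : IsConj (ι y) (z' ^ K₁) := isConj_of_mul (c := b') (by rw [← hz2']; group)
    exact (a1.trans (hconj.pow K₁)).trans a2.symm
  obtain ⟨c, hc⟩ := isConj_iff.mp hc2
  -- `c * ι x * c⁻¹ = ι y`
  obtain ⟨k, g, hg⟩ := hfr c⁻¹
  have hcen : Commute (ι (r cs w₀ ^ 2) ^ k) (ι x) := by
    rw [map_pow]; exact (G.central _).pow_left k
  have hxg : x * g = g * y := by
    apply hinj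
    rw [map_mul, map_mul, ← hg, ← hc, ← mul_assoc, ← hcen.eq]
    group
  exact cyc_of_conj hw₀ hN hK _ x g rfl hx hxg

end assembly
end ATM

/-- In the Artin–Tits monoid of a finite Coxeter system, two periodic elements of the same
period are cyclically conjugate.  Here `Δ` is the Garside element: the image in `B⁺` of a
reduced word for the longest element `w₀` of `W`. -/
theorem periodic_elements_of_same_period_cyclically_conjugate
    {B : Type*} (M : CoxeterMatrix B) {W : Type*} [Group W] (cs : CoxeterSystem M W)
    [Finite W]
    (w₀ : W) (hw₀ : ∀ w : W, cs.length w ≤ cs.length w₀)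
    (l : List B) (hl : cs.wordProd l = w₀) (hlen : l.length = cs.length w₀)
    (Δ : ArtinTitsMonoid M) (hΔ : Δ = (braidCon M).mk' (FreeMonoid.ofList l))
    (x y : ArtinTitsMonoid M) (d p d' p' : ℕ)
    (hd : 0 < d) (hp : 0 < p) (hd' : 0 < d') (hp' : 0 < p')
    (hx : x ^ d = Δ ^ p) (hy : y ^ d' = Δ ^ p')
    (hperiod : d * p' = d' * p) :
    Relation.ReflTransGen
      (fun u v : ArtinTitsMonoid M => ∃ a b, u = a * b ∧ v = b * a) x y := by
  have hred : cs.IsReduced l := by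
    rw [CoxeterSystem.IsReduced, hl, hlen]
  have hΔ' : Δ = ATM.r cs w₀ := by
    rw [hΔ, ← hl, ATM.r_eq hred]; rfl
  rw [hΔ'] at hx hy
  have ex : x ^ (2 * d * p') = (ATM.r cs w₀ ^ 2) ^ (p * p') := by
    rw [show 2 * d * p' = d * (2 * p') by ring, pow_mul, hx, ← pow_mul, ← pow_mul]
    congr 1; ring
  have ey : y ^ (2 * d * p') = (ATM.r cs w₀ ^ 2) ^ (p * p') := by
    rw [show 2 * d * p' = d' * (2 * p) by rw [mul_assoc, hperiod]; ring, pow_mul, hy, ← pow_mul,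
      ← pow_mul]
    congr 1; ring
  exact ATM.main_aux hw₀ (by positivity) (by positivity) ex ey
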